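/- Let S be a finite alphabet with complementation and let V, W ⊆ S^d be equivalent polybox codes such that neither V nor W contains a twin pair, V ∩ W = ∅, and V ≠ ∅. Then |V| ≥ 12. -/

import Mathlib

/-- `ES` is the set of all `B ⊆ S` containing exactly one letter from each
complementary pair `{s, s'}`. -/
def ESet {S : Type*} (c : S → S) : Set (Set S) :=
  {B | ∀ s, s ∈ B ↔ c s ∉ B}

/-- `Es = {B ∈ ES : s ∈ B}`. -/
def Eltr {S : Type*} (c : S → S) (s : S) : Set (Set S) :=
  {B | B ∈ ESet c ∧ s ∈ B}

/-- The equicomplementary realization `v̌ = Ev₁ × ⋯ × Ev_d` of a word `v ∈ S^d`,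
viewed as a box in the `d`-box `(ES)^d`. -/
def realize {S : Type*} (c : S → S) {d : ℕ} (v : Fin d → S) :
    Set (Fin d → Set S) :=
  {B | ∀ i, B i ∈ Eltr c (v i)}

/-- Words `u, v ∈ S^d` are dichotomous: some coordinate carries complementary
letters. -/
def Dichotomous {S : Type*} (c : S → S) {d : ℕ} (u v : Fin d → S) : Prop :=
  ∃ j, v j = c (u j)

/-- Words `u, v ∈ S^d` form a twin pair. -/
def TwinPair {S : Type*} (c : S → S) {d : ℕ} (u v : Fin d → S) : Prop :=
  ∃ j, v j = c (u j) ∧ ∀ i, i ≠ j → u i = v i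

/-- A polybox code: a set of pairwise dichotomous words. -/
def PolyboxCode {S : Type*} (c : S → S) {d : ℕ} (V : Set (Fin d → S)) : Prop :=
  ∀ u ∈ V, ∀ v ∈ V, u ≠ v → Dichotomous c u v

/-- Polybox codes `V, W ⊆ S^d` are equivalent if
`⋃_{v ∈ V} v̌ = ⋃_{w ∈ W} w̌`. -/
def Equivalent {S : Type*} (c : S → S) {d : ℕ}
    (V W : Set (Fin d → S)) : Prop :=
  (⋃ v ∈ V, realize c v) = ⋃ w ∈ W, realize c w

/-- A polybox code `V ⊆ S^d` is rigid if every polybox code equivalent to `V`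
equals `V`. -/
def Rigid {S : Type*} (c : S → S) {d : ℕ} (V : Set (Fin d → S)) : Prop :=
  ∀ W : Set (Fin d → S), PolyboxCode c W → Equivalent c V W → W = V

open Classical in
/-- consistent letter sets extend to members of `ESet` -/
theorem exists_ES {S : Type*} {c : S → S} (hinv : ∀ s, c (c s) = s) (hne : ∀ s, c s ≠ s)
    (A : Set S) (hA : ∀ s ∈ A, c s ∉ A) : ∃ B ∈ ESet c, A ⊆ B := by
  refine ⟨{s | s ∈ A ∨ (c s ∉ A ∧ WellOrderingRel s (c s))}, ?_, fun s hs => Or.inl hs⟩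
  intro s
  have h1 := hA s
  have h2 := hA (c s)
  rw [hinv] at h2
  have htri := trichotomous_of (WellOrderingRel (α := S)) s (c s)
  have hasy : ∀ a b : S, WellOrderingRel a b → ¬ WellOrderingRel b a :=
    fun a b h h' => asymm_of (WellOrderingRel (α := S)) h h'
  have h3 := hasy s (c s)
  have h4 := hne s
  simp only [Set.mem_ofPred_eq, hinv]
  rcases htri with h | h | h
  · tauto
  · exact absurd h.symm h4
  · have := hasy _ _ h
    tauto

section
variable {S : Type*} {c : S → S} {d : ℕ}

structure Good (c : S → S) : Prop where
  inv : ∀ s, c (c s) = s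
  ne : ∀ s, c s ≠ s

def Pt (c : S → S) (x : Fin d → Set S) : Prop := ∀ i, x i ∈ ESet c
def In (x : Fin d → Set S) (v : Fin d → S) : Prop := ∀ i, v i ∈ x i
def Code (c : S → S) (V : Finset (Fin d → S)) : Prop :=
  ∀ u ∈ V, ∀ v ∈ V, u ≠ v → Dichotomous c u v
def TF (c : S → S) (V : Finset (Fin d → S)) : Prop := ∀ u ∈ V, ∀ v ∈ V, ¬ TwinPair c u v
/-- every point of `V` is a point of `W` -/
def Cv (c : S → S) (V W : Finset (Fin d → S)) : Prop :=
  ∀ x, Pt c x → (∃ v ∈ V, In x v) → ∃ w ∈ W, In x w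
/-- words agree off one coordinate -/
def Off (i : Fin d) (u v : Fin d → S) : Prop := ∀ a, a ≠ i → u a = v a

theorem Good.ex1 (g : Good c) (s : S) : ∃ B ∈ ESet c, s ∈ B := by
  obtain ⟨B, hB, h⟩ := exists_ES g.inv g.ne {s} (by rintro _ rfl; exact g.ne _)
  exact ⟨B, hB, h rfl⟩

theorem Good.flip (g : Good c) {s t : S} (h : s ≠ c t) : t ≠ c s := by
  rintro rfl; exact h (g.inv _).symm

theorem Good.ex2 (g : Good c) (s t : S) (h : t ≠ c s) : ∃ B ∈ ESet c, s ∈ B ∧ t ∈ B := by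
  obtain ⟨B, hB, h'⟩ := exists_ES g.inv g.ne {s, t} (by
    have h1 := g.ne s; have h2 := g.ne t; have h3 := g.flip h
    rintro _ (rfl | rfl) <;> simp <;> grind)
  exact ⟨B, hB, h' (by simp), h' (by simp)⟩

theorem Good.ex3 (g : Good c) (s t u : S) (h : t ≠ c s) (h' : u ≠ c s) (h'' : u ≠ c t) :
    ∃ B ∈ ESet c, s ∈ B ∧ t ∈ B ∧ u ∈ B := by
  obtain ⟨B, hB, h'⟩ := exists_ES g.inv g.ne {s, t, u} (by
    have h1 := g.ne s; have h2 := g.ne t; have h3 := g.flip h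
    have h4 := g.ne u; have h5 := g.flip h'; have h6 := g.flip h''
    rintro _ (rfl | rfl | rfl) <;> simp <;> grind)
  exact ⟨B, hB, h' (by simp), h' (by simp), h' (by simp)⟩

theorem ES_not (g : Good c) {B : Set S} (hB : B ∈ ESet c) {s : S} (h : s ∈ B) : c s ∉ B :=
  (hB s).1 h
theorem ES_not' (g : Good c) {B : Set S} (hB : B ∈ ESet c) {s : S} (h : c s ∈ B) : s ∉ B :=
  fun h' => (hB s).1 h' h
theorem ES_compl (g : Good c) {B : Set S} (hB : B ∈ ESet c) : Bᶜ ∈ ESet c := by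
  intro s
  have h1 := hB s
  simp only [Set.mem_compl_iff]
  tauto
theorem ES_ne (g : Good c) {B : Set S} (hB : B ∈ ESet c) {s t : S} (h : s ∈ B) (h' : t ∈ B) :
    t ≠ c s := by
  rintro rfl; exact ES_not g hB h h'

theorem Pt.upd {x : Fin d → Set S} (hx : Pt c x) {i : Fin d} {B : Set S} (hB : B ∈ ESet c) :
    Pt c (Function.update x i B) := by
  intro a
  by_cases h : a = i
  · subst h; simpa using hB
  · simpa [h] using hx a

/-- `v` matches `x` off `i` -/
def Mt (i : Fin d) (x : Fin d → Set S) (v : Fin d → S) : Prop := ∀ a, a ≠ i → v a ∈ x a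

theorem In.mt {x : Fin d → Set S} {v : Fin d → S} (h : In x v) (i : Fin d) : Mt i x v :=
  fun a _ => h a
theorem in_upd {x : Fin d → Set S} {v : Fin d → S} {i : Fin d} {B : Set S} :
    In (Function.update x i B) v ↔ v i ∈ B ∧ Mt i x v := by
  constructor
  · intro h
    refine ⟨by simpa using h i, fun a ha => by simpa [ha] using h a⟩
  · rintro ⟨h, h'⟩ a
    by_cases ha : a = i
    · subst ha; simpa using h
    · simpa [ha] using h' a ha
theorem in_updw {x : Fin d → Set S} {v : Fin d → S} {i : Fin d} {s : S} :
    In x (Function.update v i s) ↔ s ∈ x i ∧ Mt i x v := by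
  constructor
  · intro h
    refine ⟨by simpa using h i, fun a ha => by simpa [ha] using h a⟩
  · rintro ⟨h, h'⟩ a
    by_cases ha : a = i
    · subst ha; simpa using h
    · simpa [ha] using h' a ha
theorem mt_updw {x : Fin d → Set S} {v : Fin d → S} {i : Fin d} {s : S} :
    Mt i x (Function.update v i s) ↔ Mt i x v := by
  constructor <;> intro h a ha <;> have := h a ha <;> simpa [ha] using this
theorem mt_upd {x : Fin d → Set S} {v : Fin d → S} {i : Fin d} {B : Set S} :
    Mt i (Function.update x i B) v ↔ Mt i x v := by
  constructor <;> intro h a ha <;> have := h a ha <;> simpa [ha] using this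

theorem exists_pt (g : Good c) (v : Fin d → S) : ∃ x, Pt c x ∧ In x v := by
  choose B hB h using fun i => g.ex1 (v i)
  exact ⟨B, hB, h⟩

theorem exists_pt2 (g : Good c) {u v : Fin d → S} (h : ¬ Dichotomous c u v) :
    ∃ x, Pt c x ∧ In x u ∧ In x v := by
  have : ∀ i, v i ≠ c (u i) := fun i hi => h ⟨i, hi⟩
  choose B hB h using fun i => g.ex2 (u i) (v i) (this i)
  exact ⟨B, hB, fun i => (h i).1, fun i => (h i).2⟩

theorem not_dich (g : Good c) {x : Fin d → Set S} (hx : Pt c x) {u v : Fin d → S}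
    (hu : In x u) (hv : In x v) : ¬ Dichotomous c u v := by
  rintro ⟨i, hi⟩
  exact ES_ne g (hx i) (hu i) (hv i) hi

theorem dich_symm (g : Good c) {u v : Fin d → S} (h : Dichotomous c u v) : Dichotomous c v u := by
  obtain ⟨i, hi⟩ := h
  exact ⟨i, by rw [hi, g.inv]⟩

theorem Code.eq_in (g : Good c) {V : Finset (Fin d → S)} (hV : Code c V) {x : Fin d → Set S}
    (hx : Pt c x) {u v : Fin d → S} (hu : u ∈ V) (hv : v ∈ V) (hxu : In x u) (hxv : In x v) :
    u = v := by
  by_contra h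
  exact not_dich g hx hxu hxv (hV u hu v hv h)

theorem Code.eq_mt (g : Good c) {V : Finset (Fin d → S)} (hV : Code c V) {x : Fin d → Set S}
    (hx : Pt c x) {u v : Fin d → S} (hu : u ∈ V) (hv : v ∈ V) {i : Fin d} (hxu : Mt i x u)
    (hxv : Mt i x v) (hi : v i ≠ c (u i)) : u = v := by
  by_contra h
  obtain ⟨j, hj⟩ := hV u hu v hv h
  by_cases hji : j = i
  · subst hji; exact hi hj
  · exact ES_ne g (hx j) (hxu j hji) (hxv j hji) hj

/-- local lemma -/
theorem F1 (g : Good c) {V W : Finset (Fin d → S)} (hV : Code c V)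
    (hVW : Cv c V W) (hWV : Cv c W V) {i : Fin d} {v : Fin d → S} (hv : v ∈ V)
    {x : Fin d → Set S} (hx : Pt c x) (hxv : Mt i x v) :
    (∃ w ∈ W, w i = v i ∧ Mt i x w) ∨ (∃ u ∈ V, u i = c (v i) ∧ Mt i x u) := by
  obtain ⟨B, hB, hsB⟩ := g.ex1 (v i)
  obtain ⟨w, hw, hxw⟩ := hVW _ (hx.upd (i := i) hB) ⟨v, hv, in_upd.2 ⟨hsB, hxv⟩⟩
  rw [in_upd] at hxw
  by_cases h1 : w i = v i
  · exact Or.inl ⟨w, hw, h1, hxw.2⟩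
  right
  obtain ⟨B2, hB2, hw2, hs2⟩ := g.ex2 (w i) (c (v i)) (by
    intro h; apply h1; rw [← g.inv (v i), h, g.inv])
  obtain ⟨u, hu, hxu⟩ := hWV _ (hx.upd (i := i) hB2) ⟨w, hw, in_upd.2 ⟨hw2, hxw.2⟩⟩
  rw [in_upd] at hxu
  refine ⟨u, hu, ?_, hxu.2⟩
  by_contra h2
  have := hV.eq_mt g hx hv hu hxv hxu.2 h2
  subst this
  exact ES_not' g hB2 hs2 hxu.1

/-- toggle lemma relative to a covered word -/
theorem Fc (g : Good c) {C : Finset (Fin d → S)} (hC : Code c C) {R : Fin d → S}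
    (hR : ∀ x, Pt c x → In x R → ∃ Q ∈ C, In x Q) {i : Fin d} {Z : Fin d → S} (hZ : Z ∈ C)
    (hi : Z i ≠ R i) {x : Fin d → Set S} (hx : Pt c x) (hxR : Mt i x R) (hxZ : Mt i x Z) :
    ∃ Z2 ∈ C, Z2 i = c (Z i) ∧ Mt i x Z2 := by
  obtain ⟨B, hB, h1, h2⟩ := g.ex2 (R i) (c (Z i)) (by
    intro h; apply hi; rw [← g.inv (Z i), h, g.inv])
  obtain ⟨u, hu, hxu⟩ := hR _ (hx.upd (i := i) hB) (in_upd.2 ⟨h1, hxR⟩)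
  rw [in_upd] at hxu
  refine ⟨u, hu, ?_, hxu.2⟩
  by_contra h3
  have := hC.eq_mt g hx hZ hu hxZ hxu.2 h3
  subst this
  exact ES_not' g hB h2 hxu.1

open Classical in
theorem card_le_of_cv (g : Good c) {V W : Finset (Fin d → S)} (hV : Code c V)
    (hVW : Cv c V W) : V.card ≤ W.card := by
  by_cases hne : V.Nonempty
  swap
  · simp [Finset.not_nonempty_iff_eq_empty.1 hne]
  obtain ⟨v0, hv0⟩ := hne
  obtain ⟨x, hx, -⟩ := exists_pt g v0
  let e : (Fin d → S) → Finset (Fin d) := fun v => Finset.univ.filter (fun i => v i ∉ x i)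
  let y : Finset (Fin d) → Fin d → Set S := fun E i => if i ∈ E then (x i)ᶜ else x i
  have hy : ∀ E, Pt c (y E) := by
    intro E i
    simp only [y]
    split_ifs
    · exact ES_compl g (hx i)
    · exact hx i
  have hye : ∀ v, In (y (e v)) v := by
    intro v i
    by_cases h : v i ∈ x i <;> simp [y, e, h]
  have huniq : ∀ E v, In (y E) v → e v = E := by
    intro E v h
    ext i
    have := h i
    by_cases h : i ∈ E <;> simp_all [y, e]
  have hsub : V.image e ⊆ W.image e := by
    intro E hE
    obtain ⟨v, hv, rfl⟩ := Finset.mem_image.1 hE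
    obtain ⟨w, hw, hxw⟩ := hVW _ (hy (e v)) ⟨v, hv, hye v⟩
    exact Finset.mem_image.2 ⟨w, hw, huniq _ _ hxw⟩
  have hinj : (V.image e).card = V.card := by
    apply Finset.card_image_of_injOn
    intro u hu v hv huv
    refine hV.eq_in g (hy (e u)) hu hv (hye u) ?_
    have : e u = e v := huv
    rw [this]; exact hye v
  calc V.card = (V.image e).card := hinj.symm
    _ ≤ (W.image e).card := Finset.card_le_card hsub
    _ ≤ W.card := Finset.card_image_le

theorem off_update {u : Fin d → S} {i : Fin d} {s : S} : Off i (Function.update u i s) u := by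
  intro a ha; simp [ha]

theorem twin_update (g : Good c) {u : Fin d → S} {i : Fin d} :
    TwinPair c u (Function.update u i (c (u i))) :=
  ⟨i, by simp, fun a ha => by simp [ha]⟩

open Classical in
/-- a twin-free code covering a word not in it has at least five words -/
theorem cov5 (g : Good c) : ∀ (n : ℕ) (C : Finset (Fin d → S)), C.card = n → Code c C → TF c C →
    ∀ R : Fin d → S, (∀ x, Pt c x → In x R → ∃ Q ∈ C, In x Q) → R ∉ C → 5 ≤ C.card := by
  intro n
  induction n using Nat.strong_induction_on with
  | _ n ih =>
  intro C hn hC hT R hR hRC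
  by_cases hall : ∀ Q ∈ C, ¬ Dichotomous c R Q
  swap
  · push Not at hall
    obtain ⟨Q, hQ, hQd⟩ := hall
    let C0 := C.filter (fun Q => ¬ Dichotomous c R Q)
    have hlt : C0.card < C.card := Finset.card_lt_card (Finset.filter_ssubset.2 ⟨Q, hQ, by simpa using hQd⟩)
    have := ih C0.card (by omega) C0 rfl
      (fun u hu v hv => hC u (Finset.mem_filter.1 hu).1 v (Finset.mem_filter.1 hv).1)
      (fun u hu v hv => hT u (Finset.mem_filter.1 hu).1 v (Finset.mem_filter.1 hv).1) R
      (by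
        intro x hx hxR
        obtain ⟨Q, hQ, hxQ⟩ := hR x hx hxR
        exact ⟨Q, Finset.mem_filter.2 ⟨hQ, not_dich g hx hxR hxQ⟩, hxQ⟩)
      (by intro h; exact hRC (Finset.mem_filter.1 h).1)
    omega
  -- the case of a single word carrying a letter
  have hsingle : ∀ i, ∀ Q ∈ C, Q i ≠ R i → (∀ Z ∈ C, Z i = Q i → Z = Q) → 5 ≤ C.card := by
    intro i Q hQ hi hun
    let D := C.filter (fun Z => Z i = c (Q i))
    have hQD : Q ∉ D := by
      intro h
      exact g.ne _ (Finset.mem_filter.1 h).2.symm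
    have hDs : D ⊆ C := Finset.filter_subset _ _
    have hlt : D.card < C.card :=
      Finset.card_lt_card (Finset.ssubset_iff_subset_ne.2 ⟨hDs, fun h => hQD (h ▸ hQ)⟩)
    have := ih D.card (by omega) D rfl (fun u hu v hv => hC u (hDs hu) v (hDs hv))
      (fun u hu v hv => hT u (hDs hu) v (hDs hv)) (Function.update Q i (c (Q i)))
      (by
        intro y hy hyQ
        rw [in_updw] at hyQ
        have hnd : ∀ a, Q a ≠ c (R a) := fun a ha => hall Q hQ ⟨a, ha⟩
        choose B hB hBR hBQ using fun a => g.ex2 (R a) (Q a) (hnd a)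
        let x : Fin d → Set S := fun a => if Q a = R a then y a else B a
        have hx : Pt c x := by
          intro a; simp only [x]; split_ifs
          · exact hy a
          · exact hB a
        have hxR : Mt i x R := by
          intro a ha; simp only [x]; split_ifs with h
          · rw [← h]; exact hyQ.2 a ha
          · exact hBR a
        have hxQ : Mt i x Q := by
          intro a ha; simp only [x]; split_ifs with h
          · exact hyQ.2 a ha
          · exact hBQ a
        obtain ⟨Z, hZ, hZi, hxZ⟩ := Fc g hC hR hQ hi hx hxR hxQ
        refine ⟨Z, Finset.mem_filter.2 ⟨hZ, hZi⟩, ?_⟩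
        intro a
        by_cases hai : a = i
        · subst hai; rw [hZi]; exact hyQ.1
        by_cases hQR : Q a = R a
        · have := hxZ a hai
          simpa [x, hQR] using this
        · have hZQ : Z a = Q a := by
            by_contra hne
            obtain ⟨B', hB', h1, h2, h3⟩ := g.ex3 (R a) (Z a) (c (Q a))
              (ES_ne g (hx a) (hxR a hai) (hxZ a hai))
              (by intro h; apply hQR; rw [← g.inv (Q a), h, g.inv])
              (by intro h; apply hne; rw [← g.inv (Q a), h, g.inv])
            have hup : ∀ w : Fin d → S, Mt i x w → w a ∈ B' → Mt i (Function.update x a B') w := by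
              intro w hw hwa b hb
              by_cases hba : b = a
              · subst hba; simpa using hwa
              · simpa [hba] using hw b hb
            obtain ⟨Z3, hZ3, hZ3i, hxZ3⟩ := Fc g hC hR hZ
              (by
                rw [hZi]; intro h
                exact hnd i (by rw [← h, g.inv]))
              (hx.upd (i := a) hB') (hup R hxR h1) (hup Z hxZ h2)
            rw [hZi, g.inv] at hZ3i
            have := hun Z3 hZ3 hZ3i
            subst this
            have := hxZ3 a hai
            simp only [Function.update_self] at this
            exact ES_not' g hB' h3 this
          rw [hZQ]; exact hyQ.2 a hai)
      (by
        intro h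
        exact hT Q hQ _ (hDs h) (twin_update g))
    omega
  obtain ⟨x0, hx0, hx0R⟩ := exists_pt g R
  obtain ⟨Q, hQ, hxQ⟩ := hR x0 hx0 hx0R
  have hQR : Q ≠ R := by rintro rfl; exact hRC hQ
  obtain ⟨i, hi⟩ := Function.ne_iff.1 hQR
  obtain ⟨Z, hZ, hZi, -⟩ := Fc g hC hR hQ hi hx0 (hx0R.mt i) (hxQ.mt i)
  have hZR : Z i ≠ R i := by
    rw [hZi]; intro h
    exact hall Q hQ ⟨i, by rw [← h, g.inv]⟩
  by_cases hA : ∀ Y ∈ C, Y i = Q i → Y = Q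
  · exact hsingle i Q hQ hi hA
  by_cases hB : ∀ Y ∈ C, Y i = Z i → Y = Z
  · exact hsingle i Z hZ hZR hB
  push Not at hA hB
  obtain ⟨Q2, hQ2, hQ2i, hQ2n⟩ := hA
  obtain ⟨Z2, hZ2, hZ2i, hZ2n⟩ := hB
  by_contra hlt
  have hQZ : ∀ Y Y' : Fin d → S, Y i = Q i → Y' i = Z i → Y ≠ Y' := by
    rintro Y Y' h h' rfl
    exact g.ne (Q i) (by rw [← hZi, ← h', h])
  have hfour : ({Q, Q2, Z, Z2} : Finset (Fin d → S)).card = 4 := by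
    have := hQZ Q Z rfl rfl
    have := hQZ Q Z2 rfl hZ2i
    have := hQZ Q2 Z hQ2i rfl
    have := hQZ Q2 Z2 hQ2i hZ2i
    rw [Finset.card_insert_of_notMem, Finset.card_insert_of_notMem, Finset.card_insert_of_notMem,
      Finset.card_singleton] <;> simp <;> grind
  have hCeq : ({Q, Q2, Z, Z2} : Finset (Fin d → S)) = C := by
    apply Finset.eq_of_subset_of_card_le
    · intro u; simp; rintro (rfl | rfl | rfl | rfl) <;> assumption
    · omega
  let D := ({Q, Q2} : Finset (Fin d → S)).image (fun u => Function.update u i (R i))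
  have hDc : D.card ≤ 2 := Finset.card_image_le.trans Finset.card_le_two
  have hDm : ∀ u ∈ D, ∃ Y ∈ C, Y i = Q i ∧ u = Function.update Y i (R i) := by
    intro u hu
    obtain ⟨Y, hY, rfl⟩ := Finset.mem_image.1 hu
    simp only [Finset.mem_insert, Finset.mem_singleton] at hY
    rcases hY with rfl | rfl
    · exact ⟨Y, hQ, rfl, rfl⟩
    · exact ⟨Y, hQ2, hQ2i, rfl⟩
  have hRD : R ∈ D := by
    by_contra hRD
    have hC4 : C.card = 4 := by rw [← hCeq]; exact hfour
    have := ih D.card (by omega) D rfl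
      (by
        intro u hu v hv huv
        obtain ⟨Y, hY, hYi, rfl⟩ := hDm u hu
        obtain ⟨Y', hY', hYi', rfl⟩ := hDm v hv
        have hne : Y ≠ Y' := by rintro rfl; exact huv rfl
        obtain ⟨j, hj⟩ := hC Y hY Y' hY' hne
        have hji : j ≠ i := by
          rintro rfl; rw [hYi, hYi'] at hj; exact g.ne _ hj.symm
        exact ⟨j, by simpa [hji] using hj⟩)
      (by
        intro u hu v hv huv
        obtain ⟨Y, hY, hYi, rfl⟩ := hDm u hu
        obtain ⟨Y', hY', hYi', rfl⟩ := hDm v hv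
        obtain ⟨j, hj, hj'⟩ := huv
        have hji : j ≠ i := by
          rintro rfl; simp at hj; exact g.ne _ hj.symm
        refine hT Y hY Y' hY' ⟨j, by simpa [hji] using hj, ?_⟩
        intro a ha
        by_cases hai : a = i
        · subst hai; rw [hYi, hYi']
        · simpa [hai] using hj' a ha)
      R
      (by
        intro x hx hxR
        obtain ⟨B, hB, h1, h2⟩ := g.ex2 (R i) (Q i) (fun h => hall Q hQ ⟨i, h⟩)
        obtain ⟨Y, hY, hxY⟩ := hR _ (hx.upd (i := i) hB) (in_upd.2 ⟨h1, hxR.mt i⟩)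
        rw [in_upd] at hxY
        have hYi : Y i ≠ Z i := by
          rw [hZi]; exact ES_ne g hB h2 hxY.1
        refine ⟨Function.update Y i (R i), Finset.mem_image.2 ⟨Y, ?_, rfl⟩, ?_⟩
        · rw [← hCeq] at hY
          simp only [Finset.mem_insert, Finset.mem_singleton] at hY ⊢
          rcases hY with h | h | h | h
          · exact Or.inl h
          · exact Or.inr h
          · exact absurd (by rw [h]) hYi
          · exact absurd (by rw [h, hZ2i]) hYi
        · exact in_updw.2 ⟨hxR i, hxY.2⟩)
      hRD
    omega
  obtain ⟨Y, hY, hYi, hYR⟩ := hDm R hRD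
  have : ∃ Y' ∈ C, Y' i = Q i ∧ Y ≠ Y' := by
    by_cases h : Y = Q
    · exact ⟨Q2, hQ2, hQ2i, by rw [h]; exact hQ2n.symm⟩
    · exact ⟨Q, hQ, rfl, h⟩
  obtain ⟨Y', hY', hYi', hne⟩ := this
  obtain ⟨j, hj⟩ := hC Y hY Y' hY' hne
  have hji : j ≠ i := by
    rintro rfl; rw [hYi, hYi'] at hj; exact g.ne _ hj.symm
  refine hall Y' hY' ⟨j, ?_⟩
  rw [hj, hYR]; simp [hji]

open Classical in
/-- the letter class -/
noncomputable def cls (V : Finset (Fin d → S)) (i : Fin d) (s : S) : Finset (Fin d → S) :=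
  V.filter (fun v => v i = s)

theorem mem_cls {V : Finset (Fin d → S)} {i : Fin d} {s : S} {v : Fin d → S} :
    v ∈ cls V i s ↔ v ∈ V ∧ v i = s := by
  simp [cls]
theorem cls_sub {V : Finset (Fin d → S)} {i : Fin d} {s : S} : cls V i s ⊆ V :=
  fun _ h => (mem_cls.1 h).1
theorem Code.mono {V V' : Finset (Fin d → S)} (h : Code c V) (hs : V' ⊆ V) : Code c V' :=
  fun u hu v hv => h u (hs hu) v (hs hv)
theorem TF.mono {V V' : Finset (Fin d → S)} (h : TF c V) (hs : V' ⊆ V) : TF c V' :=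
  fun u hu v hv => h u (hs hu) v (hs hv)

/-- a class covering the twin of a word has at least five words -/
theorem cls5 (g : Good c) {V : Finset (Fin d → S)} (hV : Code c V) (hT : TF c V) {i : Fin d}
    {v : Fin d → S} (hv : v ∈ V)
    (h : ∀ x, Pt c x → Mt i x v → ∃ u ∈ V, u i = c (v i) ∧ Mt i x u) :
    5 ≤ (cls V i (c (v i))).card := by
  refine cov5 g _ _ rfl (hV.mono cls_sub) (hT.mono cls_sub) (Function.update v i (c (v i))) ?_ ?_
  · intro x hx hxv
    rw [in_updw] at hxv
    obtain ⟨u, hu, hui, hxu⟩ := h x hx hxv.2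
    refine ⟨u, mem_cls.2 ⟨hu, hui⟩, ?_⟩
    intro a
    by_cases ha : a = i
    · subst ha; rw [hui]; exact hxv.1
    · exact hxu a ha
  · intro h
    exact hT v hv _ (cls_sub h) (twin_update g)

theorem cls_card_lt (g : Good c) {V : Finset (Fin d → S)} {i : Fin d}
    {v : Fin d → S} (hv : v ∈ V) : (cls V i (c (v i))).card < V.card := by
  apply Finset.card_lt_card
  refine Finset.ssubset_iff_subset_ne.2 ⟨cls_sub, fun h => ?_⟩
  rw [← h] at hv
  exact g.ne _ (mem_cls.1 hv).2.symm

open Classical in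
theorem cov5' (g : Good c) {C : Finset (Fin d → S)} (hC : Code c C) (hT : TF c C)
    {R : Fin d → S} (hR : ∀ x, Pt c x → In x R → ∃ Q ∈ C, In x Q) (hRC : R ∉ C)
    (h5 : C.card ≤ 5) : ∀ Q ∈ C, ¬ Dichotomous c R Q ∧ ∀ i, ¬ Off i Q R := by
  have hall : ∀ Q ∈ C, ¬ Dichotomous c R Q := by
    by_contra hall
    push Not at hall
    obtain ⟨Q, hQ, hQd⟩ := hall
    let C0 := C.filter (fun Q => ¬ Dichotomous c R Q)
    have hlt : C0.card < C.card := Finset.card_lt_card (Finset.filter_ssubset.2 ⟨Q, hQ, by simpa using hQd⟩)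
    have := cov5 g _ C0 rfl (hC.mono (Finset.filter_subset _ _)) (hT.mono (Finset.filter_subset _ _)) R
      (by
        intro x hx hxR
        obtain ⟨Q, hQ, hxQ⟩ := hR x hx hxR
        exact ⟨Q, Finset.mem_filter.2 ⟨hQ, not_dich g hx hxR hxQ⟩, hxQ⟩)
      (by intro h; exact hRC (Finset.mem_filter.1 h).1)
    omega
  intro Q hQ
  refine ⟨hall Q hQ, fun i hoff => ?_⟩
  have hi : Q i ≠ R i := by
    intro h
    apply hRC
    have : Q = R := by
      funext a
      by_cases ha : a = i
      · rw [ha, h]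
      · exact hoff a ha
    rwa [← this]
  have := cls5 g hC hT (i := i) hQ (by
    intro x hx hxQ
    exact Fc g hC hR hQ hi hx (fun a ha => by rw [← hoff a ha]; exact hxQ a ha) hxQ)
  have := cls_card_lt g (i := i) hQ
  omega

/-- twin-free codes with at most five words are rigid -/
theorem rigid5 (g : Good c) {V W : Finset (Fin d → S)} (hV : Code c V) (hW : Code c W)
    (hT : TF c W) (hVW : Cv c V W) (hWV : Cv c W V) (h5 : W.card ≤ 5) : V ⊆ W := by
  intro R hRV
  by_contra hRW
  have hcov : ∀ P ∈ V, ∀ x, Pt c x → In x P → ∃ Q ∈ W, In x Q :=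
    fun P hP x hx hxP => hVW x hx ⟨P, hP, hxP⟩
  have h1 := cov5' g hW hT (hcov R hRV) hRW h5
  have h2 : ∀ P ∈ V, P ∉ W := by
    intro P hP hPW
    by_cases h : R = P
    · exact hRW (h ▸ hPW)
    · exact (h1 P hPW).1 (hV R hRV P hP h)
  have h3 : ∀ P ∈ V, ∀ Q ∈ W, ¬ Dichotomous c P Q := fun P hP Q hQ =>
    (cov5' g hW hT (hcov P hP) (h2 P hP) h5 Q hQ).1
  obtain ⟨x, hx, hxR⟩ := exists_pt g R
  obtain ⟨w, hw, hxw⟩ := hVW x hx ⟨R, hRV, hxR⟩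
  have hne : w ≠ R := by rintro rfl; exact hRW hw
  obtain ⟨j, hj⟩ := Function.ne_iff.1 hne
  have h4 : ∃ u ∈ W, u j = c (w j) := by
    rcases F1 g hW hWV hVW (i := j) hw hx (hxw.mt j) with ⟨v, hv, hvj, hxv⟩ | ⟨u, hu, huj, -⟩
    · have := hV.eq_mt g hx hRV hv (hxR.mt j) hxv (by
        rw [hvj]; exact ES_ne g (hx j) (hxR j) (hxw j))
      subst this
      exact absurd hvj.symm hj
    · exact ⟨u, hu, huj⟩
  obtain ⟨u, hu, huj⟩ := h4
  have h6 := cls5 g hW hT (i := j) hw (by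
    intro y hy hyw
    rcases F1 g hW hWV hVW (i := j) hw hy hyw with ⟨v, hv, hvj, hxv⟩ | h
    · exact absurd ⟨j, by rw [huj, hvj]⟩ (h3 v hv u hu)
    · exact h)
  have := cls_card_lt g (i := j) hw
  omega

end

section
variable {S : Type*} {c : S → S} {d : ℕ}

open Classical in
/-- words whose letter at `i` lies in `B` -/
noncomputable def flt (V : Finset (Fin d → S)) (i : Fin d) (B : Set S) : Finset (Fin d → S) :=
  V.filter (fun v => v i ∈ B)

theorem mem_flt {V : Finset (Fin d → S)} {i : Fin d} {B : Set S} {v : Fin d → S} :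
    v ∈ flt V i B ↔ v ∈ V ∧ v i ∈ B := by
  simp [flt]

open Classical in
/-- the slice of a code at the point `B` of the `i`-th axis -/
noncomputable def sl (V : Finset (Fin d → S)) (i : Fin d) (B : Set S) (s : S) :
    Finset (Fin d → S) :=
  (flt V i B).image (fun v => Function.update v i s)

theorem mem_sl {V : Finset (Fin d → S)} {i : Fin d} {B : Set S} {s : S} {u : Fin d → S} :
    u ∈ sl V i B s ↔ ∃ v ∈ V, v i ∈ B ∧ Function.update v i s = u := by
  simp [sl, mem_flt, and_assoc]

theorem flt_card (g : Good c) (V : Finset (Fin d → S)) (i : Fin d) {B : Set S} :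
    (flt V i B).card + (flt V i Bᶜ).card = V.card := by
  classical
  have := Finset.card_filter_add_card_filter_not (s := V) (fun v => v i ∈ B)
  convert this using 2 <;> congr 1 <;> ext v <;> simp [mem_flt]

theorem sl_dich (g : Good c) {i : Fin d} {B : Set S} (hB : B ∈ ESet c) {u v : Fin d → S}
    (hu : u i ∈ B) (hv : v i ∈ B) (s : S) (h : Dichotomous c u v) :
    Dichotomous c (Function.update u i s) (Function.update v i s) := by
  obtain ⟨j, hj⟩ := h
  have hji : j ≠ i := by
    rintro rfl; exact ES_ne g hB hu hv hj
  exact ⟨j, by simpa [hji] using hj⟩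

theorem sl_code (g : Good c) {V : Finset (Fin d → S)} (hV : Code c V) (i : Fin d) {B : Set S}
    (hB : B ∈ ESet c) (s : S) : Code c (sl V i B s) := by
  intro u hu v hv huv
  obtain ⟨u, hu1, hu', rfl⟩ := mem_sl.1 hu
  obtain ⟨v, hv1, hv', rfl⟩ := mem_sl.1 hv
  exact sl_dich g hB hu' hv' s (hV u hu1 v hv1 (by rintro rfl; exact huv rfl))

theorem upd_inj (g : Good c) {V : Finset (Fin d → S)} (hV : Code c V) {i : Fin d} {B : Set S}
    (hB : B ∈ ESet c) {s : S} {u v : Fin d → S} (hu : u ∈ V) (hv : v ∈ V) (hu' : u i ∈ B)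
    (hv' : v i ∈ B) (h : Function.update u i s = Function.update v i s) : u = v := by
  by_contra hne
  obtain ⟨j, hj⟩ := sl_dich g hB hu' hv' s (hV u hu v hv hne)
  rw [h] at hj
  exact g.ne _ hj.symm

theorem sl_card (g : Good c) {V : Finset (Fin d → S)} (hV : Code c V) (i : Fin d) {B : Set S}
    (hB : B ∈ ESet c) (s : S) : (sl V i B s).card = (flt V i B).card := by
  classical
  rw [sl]
  apply Finset.card_image_of_injOn
  intro u hu v hv huv
  have hu := mem_flt.1 hu
  have hv := mem_flt.1 hv
  exact upd_inj g hV hB hu.1 hv.1 hu.2 hv.2 huv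

theorem sl_cv {V W : Finset (Fin d → S)} (h : Cv c V W) (i : Fin d) {B : Set S}
    (hB : B ∈ ESet c) (s : S) : Cv c (sl V i B s) (sl W i B s) := by
  rintro x hx ⟨u, hu, hxu⟩
  obtain ⟨v, hv, hv', rfl⟩ := mem_sl.1 hu
  rw [in_updw] at hxu
  obtain ⟨w, hw, hxw⟩ := h _ (hx.upd (i := i) hB) ⟨v, hv, in_upd.2 ⟨hv', hxu.2⟩⟩
  rw [in_upd] at hxw
  exact ⟨_, mem_sl.2 ⟨w, hw, hxw.1, rfl⟩, in_updw.2 ⟨hxu.1, hxw.2⟩⟩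

theorem card_eq (g : Good c) {V W : Finset (Fin d → S)} (hV : Code c V) (hW : Code c W)
    (hVW : Cv c V W) (hWV : Cv c W V) : V.card = W.card :=
  le_antisymm (card_le_of_cv g hV hVW) (card_le_of_cv g hW hWV)

theorem flt_eq (g : Good c) {V W : Finset (Fin d → S)} (hV : Code c V) (hW : Code c W)
    (hVW : Cv c V W) (hWV : Cv c W V) (i : Fin d) {B : Set S} (hB : B ∈ ESet c) :
    (flt V i B).card = (flt W i B).card := by
  by_cases h : ∃ s : S, True
  · obtain ⟨s, -⟩ := h
    rw [← sl_card g hV i hB s, ← sl_card g hW i hB s]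
    exact card_eq g (sl_code g hV i hB s) (sl_code g hW i hB s) (sl_cv hVW i hB s) (sl_cv hWV i hB s)
  · have : ∀ X : Finset (Fin d → S), flt X i B = ∅ := by
      intro X
      apply Finset.eq_empty_of_forall_notMem
      intro v hv
      exact h ⟨v i, trivial⟩
    rw [this, this]

theorem half6 (g : Good c) {V W : Finset (Fin d → S)} (hV : Code c V) (hW : Code c W)
    (hT : TF c W) (hVW : Cv c V W) (hWV : Cv c W V) {i : Fin d} {v w : Fin d → S}
    (hv : v ∈ V) (hw : w ∈ W) (hoff : Off i v w) (h1 : w i ≠ v i)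
    (h2 : w i ≠ c (v i)) {B : Set S} (hB : B ∈ ESet c) (hvB : v i ∈ B) (hwB : c (w i) ∈ B) :
    6 ≤ (flt W i B).card := by
  have h5 := cls5 g hW hT (i := i) hw (by
    intro x hx hxw
    rcases F1 g hW hWV hVW hw hx hxw with ⟨v', hv', hvi, hxv⟩ | h
    · exfalso
      have := hV.eq_mt g hx hv hv' (fun a ha => by rw [hoff a ha]; exact hxw a ha) hxv (by
        rw [hvi]; intro h
        exact h2 h)
      exact h1 (by rw [this, hvi])
    · exact h)
  by_contra hlt
  have hsub : cls W i (c (w i)) ⊆ flt W i B := by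
    intro u hu
    rw [mem_cls] at hu
    exact mem_flt.2 ⟨hu.1, by rw [hu.2]; exact hwB⟩
  have heq := Finset.eq_of_subset_of_card_le hsub (by omega)
  have hsl : ∀ u ∈ sl W i B (c (w i)), u ∈ W := by
    intro u hu
    obtain ⟨u, hu1, hu', rfl⟩ := mem_sl.1 hu
    have : u ∈ cls W i (c (w i)) := by rw [heq]; exact mem_flt.2 ⟨hu1, hu'⟩
    rw [mem_cls] at this
    rw [← this.2, Function.update_eq_self]; exact hu1
  have := rigid5 g (sl_code g hV i hB (c (w i))) (sl_code g hW i hB (c (w i))) (hT.mono hsl)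
    (sl_cv hVW i hB _) (sl_cv hWV i hB _) (by rw [sl_card g hW i hB]; omega)
    (mem_sl.2 ⟨v, hv, hvB, rfl⟩)
  have := hsl _ this
  have he : Function.update v i (c (w i)) = Function.update w i (c (w i)) := by
    funext a
    by_cases ha : a = i
    · subst ha; simp
    · simp [ha, hoff a ha]
  rw [he] at this
  exact hT w hw _ this (twin_update g)

theorem caseA (g : Good c) {V W : Finset (Fin d → S)} (hV : Code c V) (hW : Code c W)
    (hTV : TF c V) (hT : TF c W) (hVW : Cv c V W) (hWV : Cv c W V) (i : Fin d) {v w : Fin d → S}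
    (hv : v ∈ V) (hw : w ∈ W) (hoff : Off i v w) (h1 : w i ≠ v i) (h2 : w i ≠ c (v i)) :
    12 ≤ V.card := by
  obtain ⟨B, hB, hvB, hwB⟩ := g.ex2 (v i) (c (w i)) (by
    intro h; apply h1; rw [← g.inv (w i), h, g.inv])
  have e1 := half6 g hV hW hT hVW hWV hv hw hoff h1 h2 hB hvB hwB
  have e2 := half6 g hW hV hTV hWV hVW hw hv (fun a ha => (hoff a ha).symm) h1.symm
    (g.flip h2) (ES_compl g hB) (ES_not' g hB hwB) (ES_not g hB hvB)
  have e3 := flt_card g V i (B := B)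
  have e4 := flt_eq g hV hW hVW hWV i hB
  omega

end

section
variable {S : Type*} {c : S → S} {d : ℕ}

/-- no near-equal pairs between `V` and `W` -/
def K2 (c : S → S) (V W : Finset (Fin d → S)) : Prop :=
  ∀ v ∈ V, ∀ w ∈ W, ¬ Dichotomous c v w → ∀ a, ¬ Off a v w

theorem Off.symm {i : Fin d} {u v : Fin d → S} (h : Off i u v) : Off i v u :=
  fun a ha => (h a ha).symm

theorem K2.symm (g : Good c) {V W : Finset (Fin d → S)} (h : K2 c V W) : K2 c W V :=
  fun w hw v hv hd a ha => h v hv w hw (fun hh => hd (dich_symm g hh)) a ha.symm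

theorem Off.eq {i : Fin d} {u v : Fin d → S} (h : Off i u v) (hi : u i = v i) : u = v := by
  funext a
  by_cases ha : a = i
  · rw [ha, hi]
  · exact h a ha

theorem self_nd (g : Good c) (u : Fin d → S) : ¬ Dichotomous c u u := by
  rintro ⟨i, hi⟩; exact g.ne _ hi.symm

theorem cinj (g : Good c) {s t : S} (h : c s = c t) : s = t := by
  rw [← g.inv s, h, g.inv]

theorem two_elems {α : Type*} {C : Finset α} (h2 : C.card ≤ 2) {a b e : α} (ha : a ∈ C) (hb : b ∈ C)
    (he : e ∈ C) (hab : a ≠ b) : e = a ∨ e = b := by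
  classical
  have h : ({a, b} : Finset α) = C := by
    apply Finset.eq_of_subset_of_card_le
    · intro u; simp; rintro (rfl | rfl) <;> assumption
    · rw [Finset.card_pair hab]; exact h2
  rw [← h] at he
  simpa using he

theorem cov2_aux (g : Good c) {C : Finset (Fin d → S)} (hC : Code c C) (h2 : C.card ≤ 2)
    {R : Fin d → S} (hR : ∀ x, Pt c x → In x R → ∃ Q ∈ C, In x Q) {Q : Fin d → S} (hQ : Q ∈ C)
    {x : Fin d → Set S} (hx : Pt c x) (hxR : In x R) (hxQ : In x Q) {a : Fin d} (ha : Q a ≠ R a) :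
    Off a Q R ∧ ∃ Z ∈ C, Z a = c (Q a) ∧ Mt a x Z := by
  obtain ⟨Z, hZ, hZa, hxZ⟩ := Fc g hC hR hQ ha hx (hxR.mt a) (hxQ.mt a)
  refine ⟨?_, Z, hZ, hZa, hxZ⟩
  intro b hb
  by_contra hne
  obtain ⟨Y, hY, hYb, hxY⟩ := Fc g hC hR hQ hne hx (hxR.mt b) (hxQ.mt b)
  have hQZ : Q ≠ Z := by rintro rfl; exact g.ne _ hZa.symm
  rcases two_elems h2 hQ hZ hY hQZ with rfl | rfl
  · exact g.ne _ hYb.symm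
  · exact ES_ne g (hx b) (hxQ b) (hxZ b hb) hYb

/-- a code with at most two words covering a word not in it -/
theorem cov2 (g : Good c) {C : Finset (Fin d → S)} (hC : Code c C) (h2 : C.card ≤ 2)
    {R : Fin d → S} (hR : ∀ x, Pt c x → In x R → ∃ Q ∈ C, In x Q) (hRC : R ∉ C) :
    ∃ a, ∃ Q ∈ C, ∃ Z ∈ C, Off a Q R ∧ Off a Z R ∧ Z a = c (Q a) ∧ Q a ≠ R a ∧ Z a ≠ R a := by
  obtain ⟨x, hx, hxR⟩ := exists_pt g R
  obtain ⟨Q, hQ, hxQ⟩ := hR x hx hxR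
  have hQR : Q ≠ R := by rintro rfl; exact hRC hQ
  obtain ⟨a, ha⟩ := Function.ne_iff.1 hQR
  obtain ⟨h1, Z, hZ, hZa, hxZ⟩ := cov2_aux g hC h2 hR hQ hx hxR hxQ ha
  have hnd : Q a ≠ c (R a) := ES_ne g (hx a) (hxR a) (hxQ a)
  have hZR : Z a ≠ R a := by
    rw [hZa]; intro h; apply hnd; rw [← h, g.inv]
  obtain ⟨B, hB, hRB, hZB⟩ := g.ex2 (R a) (Z a) (by rw [hZa]; exact fun h => ha (cinj g h))
  have h3 := cov2_aux g hC h2 hR hZ (hx.upd (i := a) hB) (in_upd.2 ⟨hRB, hxR.mt a⟩)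
    (in_upd.2 ⟨hZB, hxZ⟩) hZR
  exact ⟨a, Q, hQ, Z, hZ, h1, h3.1, hZa, ha, hZR⟩

theorem step (g : Good c) {V W : Finset (Fin d → S)} (hV : Code c V) (hW : Code c W)
    (hTV : TF c V) (hTW : TF c W) (hVW : Cv c V W) (hWV : Cv c W V) (hK : K2 c V W)
    {R : Fin d → S} (hR : R ∈ V) (i : Fin d)
    (h3 : (cls V i (c (R i))).card + (cls W i (R i)).card ≤ 3) :
    2 ≤ (cls V i (c (R i))).card ∧ 1 ≤ (cls W i (R i)).card := by
  have hF := fun x hx hxR => F1 g hV hVW hWV (i := i) hR (x := x) hx hxR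
  have hQ1 : 1 ≤ (cls W i (R i)).card := by
    by_contra h0
    have h0 : cls W i (R i) = ∅ := by rw [← Finset.card_eq_zero]; omega
    have := cls5 g hV hTV (i := i) hR (by
      intro x hx hxR
      rcases hF x hx hxR with ⟨w, hw, hwi, -⟩ | h
      · have : w ∈ cls W i (R i) := mem_cls.2 ⟨hw, hwi⟩
        rw [h0] at this; simp at this
      · exact h)
    omega
  refine ⟨?_, hQ1⟩
  by_contra hlt
  by_cases hP0 : cls V i (c (R i)) = ∅
  · have := cov5 g _ (cls W i (R i)) rfl (hW.mono cls_sub) (hTW.mono cls_sub) R (by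
      intro x hx hxR
      rcases hF x hx (hxR.mt i) with ⟨w, hw, hwi, hxw⟩ | ⟨u, hu, hui, -⟩
      · refine ⟨w, mem_cls.2 ⟨hw, hwi⟩, fun a => ?_⟩
        by_cases ha : a = i
        · rw [ha, hwi]; exact hxR i
        · exact hxw a ha
      · have : u ∈ cls V i (c (R i)) := mem_cls.2 ⟨hu, hui⟩
        rw [hP0] at this; simp at this)
      (fun h => hK R hR R (cls_sub h) (self_nd g R) i (fun _ _ => rfl))
    omega
  obtain ⟨Z, hZ⟩ := Finset.nonempty_iff_ne_empty.2 hP0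
  have hZu : ∀ u ∈ V, u i = c (R i) → u = Z := by
    intro u hu hui
    have h1 : (cls V i (c (R i))).card ≤ 1 := by omega
    exact Finset.card_le_one.1 h1 u (mem_cls.2 ⟨hu, hui⟩) Z hZ
  have hZpos : 1 ≤ (cls V i (c (R i))).card := Finset.card_pos.2 ⟨Z, hZ⟩
  rw [mem_cls] at hZ
  have : ∃ j, j ≠ i ∧ Z j ≠ R j := by
    by_contra hh
    push Not at hh
    exact hTV R hR Z hZ.1 ⟨i, hZ.2, fun a ha => (hh a ha).symm⟩
  obtain ⟨j, hji, hj⟩ := this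
  -- covering by a slice
  have key : ∀ B ∈ ESet c, R j ∈ B → c (Z j) ∈ B →
      ∃ a, a ≠ j ∧ a ≠ i ∧ ∃ w1 ∈ cls W i (R i), ∃ w2 ∈ cls W i (R i), w1 j ∈ B ∧ w2 j ∈ B ∧
        (∀ b, b ≠ a → b ≠ j → w1 b = R b) ∧ (∀ b, b ≠ a → b ≠ j → w2 b = R b) ∧
        w2 a = c (w1 a) ∧ w1 a ≠ R a ∧ w2 a ≠ R a := by
    intro B hB hRB hZB
    have hle : (sl (cls W i (R i)) j B (R j)).card ≤ (cls W i (R i)).card := by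
      rw [sl_card g (hW.mono cls_sub) j hB]
      exact Finset.card_le_card (fun u hu => (mem_flt.1 hu).1)
    obtain ⟨a, q1, hq1, q2, hq2, ho1, ho2, h12, h1R, h2R⟩ :=
      cov2 g (C := sl (cls W i (R i)) j B (R j)) (sl_code g (hW.mono cls_sub) j hB _)
      (by omega) (R := R) (by
        intro x hx hxR
        rcases hF (Function.update x j B) (hx.upd hB) (by
            exact (in_upd.2 ⟨hRB, hxR.mt j⟩ : In (Function.update x j B) R).mt i) with
            ⟨w, hw, hwi, hxw⟩ | ⟨u, hu, hui, hxu⟩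
        · refine ⟨_, mem_sl.2 ⟨w, mem_cls.2 ⟨hw, hwi⟩, ?_, rfl⟩, in_updw.2 ⟨hxR j, ?_⟩⟩
          · simpa using hxw j hji
          · intro a ha
            by_cases hai : a = i
            · rw [hai, hwi]; exact hxR i
            · simpa [ha] using hxw a hai
        · exfalso
          have := hZu u hu hui
          subst this
          have := hxu j hji
          simp only [Function.update_self] at this
          exact ES_not' g hB hZB this)
      (by
        intro h
        obtain ⟨w, hw, hwB, hwe⟩ := mem_sl.1 h
        have ho : Off j R w := by
          rw [← hwe]; exact off_update
        refine hK R hR w (cls_sub hw) ?_ j ho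
        rintro ⟨b, hb⟩
        by_cases hbj : b = j
        · subst hbj; exact ES_ne g hB hRB hwB hb
        · rw [ho b hbj] at hb; exact g.ne _ hb.symm)
    obtain ⟨w1, hw1, hw1B, rfl⟩ := mem_sl.1 hq1
    obtain ⟨w2, hw2, hw2B, rfl⟩ := mem_sl.1 hq2
    have haj : a ≠ j := by
      rintro rfl; simp at h1R
    have hai : a ≠ i := by
      rintro rfl
      simp [haj] at h1R
      exact h1R (mem_cls.1 hw1).2
    refine ⟨a, haj, hai, w1, hw1, w2, hw2, hw1B, hw2B, ?_, ?_, ?_, ?_, ?_⟩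
    · intro b hb hbj; simpa [hbj] using ho1 b hb
    · intro b hb hbj; simpa [hbj] using ho2 b hb
    · simpa [haj] using h12
    · simpa [haj] using h1R
    · simpa [haj] using h2R
  obtain ⟨B, hB, hRB, hZB⟩ := g.ex2 (R j) (c (Z j)) (fun h => hj (cinj g h))
  obtain ⟨a, haj, hai, w1, hw1, w2, hw2, hw1B, hw2B, ho1, ho2, h12, h1R, h2R⟩ := key B hB hRB hZB
  have hww : w1 ≠ w2 := by rintro rfl; exact g.ne _ h12.symm
  have ht : ∀ w ∈ cls W i (R i), w j ∈ B → (∀ b, b ≠ a → b ≠ j → w b = R b) → w a ≠ R a →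
      w a ≠ c (R a) → w j = c (Z j) := by
    intro w hw hwB ho hwa hwa'
    by_contra hne
    by_cases hwj : w j = R j
    · refine hK R hR w (cls_sub hw) ?_ a ?_
      · rintro ⟨b, hb⟩
        by_cases hba : b = a
        · subst hba; exact hwa' hb
        · by_cases hbj : b = j
          · subst hbj; rw [hwj] at hb; exact g.ne _ hb.symm
          · rw [ho b hba hbj] at hb; exact g.ne _ hb.symm
      · intro b hba
        by_cases hbj : b = j
        · rw [hbj, hwj]
        · exact (ho b hba hbj).symm
    · obtain ⟨B', hB', k1, k2, k3⟩ := g.ex3 (R j) (c (Z j)) (c (w j)) (fun h => hj (cinj g h))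
        (fun h => hwj (cinj g h)) (fun h => hne (cinj g h))
      obtain ⟨a', ha', -, y1, hy1, y2, hy2, hy1B, hy2B, -, -, hy, -, -⟩ := key B' hB' k1 k2
      have hyy : y1 ≠ y2 := by rintro rfl; exact g.ne _ hy.symm
      rcases two_elems (by omega) hy1 hy2 hw hyy with rfl | rfl
      · exact ES_not' g hB' k3 hy1B
      · exact ES_not' g hB' k3 hy2B
  have e1 := ht w1 hw1 hw1B ho1 h1R (by intro h; rw [h, g.inv] at h12; exact h2R h12)
  have e2 := ht w2 hw2 hw2B ho2 h2R (by intro h; rw [h] at h12; exact h1R (cinj g h12.symm))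
  refine hTW w1 (cls_sub hw1) w2 (cls_sub hw2) ⟨a, h12, fun b hb => ?_⟩
  by_cases hbj : b = j
  · rw [hbj, e1, e2]
  · rw [ho1 b hb hbj, ho2 b hb hbj]

theorem card_rel (g : Good c) {V W : Finset (Fin d → S)} (hV : Code c V) (hW : Code c W)
    (hVW : Cv c V W) (hWV : Cv c W V) (i : Fin d) (l : S) :
    (cls V i l).card + (cls W i (c l)).card = (cls W i l).card + (cls V i (c l)).card := by
  classical
  obtain ⟨B, hB, hlB⟩ := g.ex1 l
  have hcl := ES_not g hB hlB
  have hne := g.ne l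
  let B' : Set S := {s | (s ∈ B ∧ s ≠ l) ∨ s = c l}
  have hB' : B' ∈ ESet c := by
    intro s
    have h1 := hB s
    have h2 : c s = c l ↔ s = l := ⟨cinj g, fun h => by rw [h]⟩
    have h3 : c s = l ↔ s = c l := ⟨fun h => by rw [← h, g.inv], fun h => by rw [h, g.inv]⟩
    simp only [B', Set.mem_ofPred_eq, h2]
    by_cases hs : s = l
    · subst hs; simp; tauto
    · by_cases hs2 : s = c l
      · subst hs2; simp [g.inv, hne]
      · have : c s ≠ l := fun h => hs2 (h3.1 h)
        tauto
  have key : ∀ X : Finset (Fin d → S),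
      (flt X i B).card + (cls X i (c l)).card = (flt X i B').card + (cls X i l).card := by
    intro X
    simp only [flt, cls, Finset.card_filter, ← Finset.sum_add_distrib]
    apply Finset.sum_congr rfl
    intro v _
    simp only [B', Set.mem_ofPred_eq]
    by_cases h1 : v i = l
    · simp [h1, hlB, hne.symm]
    · by_cases h2 : v i = c l
      · simp [h2, hcl, hne]
      · simp [h1, h2]
  have := key V
  have := key W
  have := flt_eq g hV hW hVW hWV i hB
  have := flt_eq g hV hW hVW hWV i hB'
  omega

theorem eight_aux (g : Good c) {V W : Finset (Fin d → S)} (hV : Code c V) (hW : Code c W)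
    (hTV : TF c V) (hTW : TF c W) (hVW : Cv c V W) (hWV : Cv c W V) (hK : K2 c V W)
    {R : Fin d → S} (hR : R ∈ V) (i : Fin d) :
    8 ≤ (cls V i (R i)).card + (cls V i (c (R i))).card + (cls W i (R i)).card
      + (cls W i (c (R i))).card := by
  by_contra hlt
  have hr := card_rel g hV hW hVW hWV i (R i)
  have s1 := step g hV hW hTV hTW hVW hWV hK hR i (by omega)
  obtain ⟨R2, hR2⟩ := Finset.card_pos.1 (show 0 < (cls V i (c (R i))).card by omega)
  obtain ⟨R3, hR3⟩ := Finset.card_pos.1 (show 0 < (cls W i (R i)).card by omega)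
  rw [mem_cls] at hR2 hR3
  have s2 := step g hV hW hTV hTW hVW hWV hK hR2.1 i (by rw [hR2.2, g.inv]; omega)
  have s3 := step g hW hV hTW hTV hWV hVW (hK.symm g) hR3.1 i (by rw [hR3.2]; omega)
  rw [hR2.2, g.inv] at s2
  rw [hR3.2] at s3
  omega

/-- a letter occurs at a coordinate -/
def Occ (V W : Finset (Fin d → S)) (i : Fin d) (s : S) : Prop := ∃ u, (u ∈ V ∨ u ∈ W) ∧ u i = s

theorem eight (g : Good c) {V W : Finset (Fin d → S)} (hV : Code c V) (hW : Code c W)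
    (hTV : TF c V) (hTW : TF c W) (hVW : Cv c V W) (hWV : Cv c W V) (hK : K2 c V W)
    {i : Fin d} {l : S} (h : Occ V W i l) :
    8 ≤ (cls V i l).card + (cls V i (c l)).card + (cls W i l).card + (cls W i (c l)).card := by
  obtain ⟨u, hu | hu, rfl⟩ := h
  · exact eight_aux g hV hW hTV hTW hVW hWV hK hu i
  · have := eight_aux g hW hV hTW hTV hWV hVW (hK.symm g) hu i
    omega

theorem cls3 (g : Good c) (X : Finset (Fin d → S)) (i : Fin d) {r p q : S} (h1 : p ≠ r)
    (h2 : p ≠ c r) (h3 : q ≠ r) (h4 : q ≠ c r) (h5 : q ≠ p) (h6 : q ≠ c p) :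
    (cls X i r).card + (cls X i (c r)).card + (cls X i p).card + (cls X i (c p)).card
     + (cls X i q).card + (cls X i (c q)).card ≤ X.card := by
  classical
  simp only [cls, Finset.card_filter, ← Finset.sum_add_distrib]
  rw [Finset.card_eq_sum_ones]
  apply Finset.sum_le_sum
  intro v _
  have := g.flip h2
  have := g.flip h4
  have := g.flip h6
  have k1 : c p ≠ c r := fun h => h1 (cinj g h)
  have k2 : c q ≠ c r := fun h => h3 (cinj g h)
  have k3 : c q ≠ c p := fun h => h5 (cinj g h)
  have := g.ne r
  have := g.ne p
  have := g.ne q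
  generalize v i = z
  by_cases e1 : z = r
  · subst e1; simp_all [eq_comm]
  by_cases e2 : z = c r
  · subst e2; simp_all [eq_comm]
  by_cases e3 : z = p
  · subst e3; simp_all [eq_comm]
  by_cases e4 : z = c p
  · subst e4; simp_all [eq_comm]
  by_cases e5 : z = q
  · subst e5; simp_all [eq_comm]
  simp [e1, e2, e3, e4, e5]
  split_ifs <;> omega

/-- at most two pairs occur at each coordinate -/
theorem twopairs (g : Good c) {V W : Finset (Fin d → S)} (hV : Code c V) (hW : Code c W)
    (hTV : TF c V) (hTW : TF c W) (hVW : Cv c V W) (hWV : Cv c W V) (hK : K2 c V W)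
    (hn : V.card ≤ 11) (i : Fin d) {r p q : S} (hr : Occ V W i r) (hp : Occ V W i p)
    (hq : Occ V W i q) (h1 : p ≠ r) (h2 : p ≠ c r) : q = r ∨ q = c r ∨ q = p ∨ q = c p := by
  by_contra hh
  push Not at hh
  have := cls3 g V i h1 h2 hh.1 hh.2.1 hh.2.2.1 hh.2.2.2
  have := cls3 g W i h1 h2 hh.1 hh.2.1 hh.2.2.1 hh.2.2.2
  have := eight g hV hW hTV hTW hVW hWV hK hr
  have := eight g hV hW hTV hTW hVW hWV hK hp
  have := eight g hV hW hTV hTW hVW hWV hK hq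
  have := card_eq g hV hW hVW hWV
  omega

end

section
variable {S : Type*} {c : S → S} {d : ℕ}

/-- words agree off two coordinates -/
def Off2 (j k : Fin d) (u v : Fin d → S) : Prop := ∀ a, a ≠ j → a ≠ k → u a = v a

theorem Off2.symm {j k : Fin d} {u v : Fin d → S} (h : Off2 j k u v) : Off2 j k v u :=
  fun a h1 h2 => (h a h1 h2).symm
theorem Off2.trans {j k : Fin d} {u v w : Fin d → S} (h : Off2 j k u v) (h' : Off2 j k v w) :
    Off2 j k u w := fun a h1 h2 => (h a h1 h2).trans (h' a h1 h2)
theorem Off2.off {j k : Fin d} {u v : Fin d → S} (h : Off2 j k u v) (hj : u j = v j) :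
    Off k u v := by
  intro a ha
  by_cases haj : a = j
  · rw [haj, hj]
  · exact h a haj ha

theorem off_nd (g : Good c) {k : Fin d} {u v : Fin d → S} (h : Off k u v) (hk : v k ≠ c (u k)) :
    ¬ Dichotomous c u v := by
  rintro ⟨b, hb⟩
  by_cases hbk : b = k
  · subst hbk; exact hk hb
  · rw [h b hbk] at hb; exact g.ne _ hb.symm

structure HS (c : S → S) (V W : Finset (Fin d → S)) (PV PW : (Fin d → S) → Prop) : Prop where
  hV : Code c V
  hW : Code c W
  hVW : Cv c V W
  hWV : Cv c W V
  ne : V.Nonempty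
  h5 : V.card ≤ 5
  tV : ∀ u ∈ V, ∀ v ∈ V, TwinPair c u v → (PV u ↔ ¬ PV v)
  tW : ∀ u ∈ W, ∀ v ∈ W, TwinPair c u v → (PW u ↔ ¬ PW v)
  dis : ∀ v ∈ V, v ∉ W
  col : ∀ v ∈ V, ∀ w ∈ W, ¬ Dichotomous c v w → ∀ a, Off a v w → (PV v ↔ ¬ PW w)
  pairs : ∀ i r p q, Occ V W i r → Occ V W i p → Occ V W i q → p ≠ r → p ≠ c r →
    q = r ∨ q = c r ∨ q = p ∨ q = c p

theorem Occ.symm {V W : Finset (Fin d → S)} {i : Fin d} {s : S} (h : Occ V W i s) : Occ W V i s := by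
  obtain ⟨u, hu, h⟩ := h
  exact ⟨u, hu.symm, h⟩

theorem HS.symm (g : Good c) {V W : Finset (Fin d → S)} {PV PW : (Fin d → S) → Prop}
    (h : HS c V W PV PW) : HS c W V PW PV where
  hV := h.hW
  hW := h.hV
  hVW := h.hWV
  hWV := h.hVW
  ne := by
    rw [← Finset.card_pos, ← card_eq g h.hV h.hW h.hVW h.hWV, Finset.card_pos]; exact h.ne
  h5 := by rw [← card_eq g h.hV h.hW h.hVW h.hWV]; exact h.h5
  tV := h.tW
  tW := h.tV
  dis := fun w hw hv => h.dis w hv hw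
  col := by
    intro w hw v hv hd a ha
    have := h.col v hv w hw (fun hh => hd (dich_symm g hh)) a ha.symm
    tauto
  pairs := fun i r p q hr hp hq => h.pairs i r p q hr.symm hp.symm hq.symm

theorem HS.star (g : Good c) {V W : Finset (Fin d → S)} {PV PW : (Fin d → S) → Prop}
    (h : HS c V W PV PW) {k : Fin d} {v1 v2 w : Fin d → S} (h1 : v1 ∈ V) (h2 : v2 ∈ V)
    (hw : w ∈ W) (ho : Off k v1 v2) (hk : v2 k = c (v1 k)) (how : Off k v1 w) : False := by
  have e1 : w k ≠ c (v1 k) := by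
    intro he
    have : v2 = w := Off.eq (i := k) (fun a ha => by rw [← ho a ha, how a ha]) (by rw [hk, he])
    exact h.dis v2 h2 (this ▸ hw)
  have e2 : w k ≠ c (v2 k) := by
    intro he
    rw [hk, g.inv] at he
    have : v1 = w := how.eq he.symm
    exact h.dis v1 h1 (this ▸ hw)
  have how2 : Off k v2 w := fun a ha => by rw [← ho a ha, how a ha]
  have c1 := h.col v1 h1 w hw (off_nd g how e1) k how
  have c2 := h.col v2 h2 w hw (off_nd g how2 e2) k how2
  have c3 := h.tV v1 h1 v2 h2 ⟨k, hk, ho⟩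
  tauto

theorem two (g : Good c) {A C : Finset (Fin d → S)} (hA : Code c A) (hC : Code c C)
    (hAC : Cv c A C) (hCA : Cv c C A) (h2 : A.card ≤ 2) {R : Fin d → S} (hR : R ∈ C)
    (hRA : R ∉ A) : ∃ a, ∃ Q ∈ A, ∃ Z ∈ A, ∃ T ∈ C, Off a Q R ∧ Off a Z R ∧ Off a T R ∧
      Z a = c (Q a) ∧ Q a ≠ R a ∧ Z a ≠ R a ∧ T a = c (R a) := by
  obtain ⟨a, Q, hQ, Z, hZ, ho1, ho2, hZQ, hQR, hZR⟩ :=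
    cov2 g hA h2 (R := R) (fun x hx hxR => hCA x hx ⟨R, hR, hxR⟩) hRA
  refine ⟨a, Q, hQ, Z, hZ, ?_⟩
  have h2' : C.card ≤ 2 := by rw [← card_eq g hA hC hAC hCA]; exact h2
  have hQC : Q ∉ C := by
    intro h
    have hne : Q ≠ R := by rintro rfl; exact hQR rfl
    refine off_nd g ho1 ?_ (hC Q h R hR hne)
    rw [← hZQ]; exact hZR.symm
  obtain ⟨b, T1, hT1, T2, hT2, k1, k2, k3, k4, k5⟩ :=
    cov2 g hC h2' (R := Q) (fun x hx hxQ => hAC x hx ⟨Q, hQ, hxQ⟩) hQC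
  have hTT : T1 ≠ T2 := by rintro rfl; exact g.ne _ k3.symm
  rcases two_elems h2' hT1 hT2 hR hTT with rfl | rfl
  · have hab : a = b := by
      by_contra hab
      exact hQR (k1 a hab).symm
    subst hab
    exact ⟨T2, hT2, ho1, ho2, fun e he => by rw [k2 e he, k1 e he], hZQ, hQR, hZR, k3⟩
  · have hab : a = b := by
      by_contra hab
      exact hQR (k2 a hab).symm
    subst hab
    exact ⟨T1, hT1, ho1, ho2, fun e he => by rw [k2 e he, k1 e he], hZQ, hQR, hZR, by rw [k3, g.inv]⟩

theorem two' (g : Good c) {V W : Finset (Fin d → S)} (hV : Code c V) (hW : Code c W)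
    (hVW : Cv c V W) (hWV : Cv c W V) {j : Fin d} {B : Set S} (hB : B ∈ ESet c)
    (h2 : (flt V j B).card ≤ 2) {w : Fin d → S} (hw : w ∈ W) (hwB : w j ∈ B)
    (hno : ∀ v ∈ V, v j ∈ B → ¬ Off j v w) :
    ∃ k, k ≠ j ∧ ∃ Q ∈ V, ∃ Z ∈ V, ∃ T ∈ W, Q j ∈ B ∧ Z j ∈ B ∧ T j ∈ B ∧
      Off2 j k Q w ∧ Off2 j k Z w ∧ Off2 j k T w ∧
      Z k = c (Q k) ∧ Q k ≠ w k ∧ Z k ≠ w k ∧ T k = c (w k) := by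
  obtain ⟨k, q, hq, z, hz, t, ht, o1, o2, o3, e1, e2, e3, e4⟩ :=
    two g (sl_code g hV j hB (w j)) (sl_code g hW j hB (w j)) (sl_cv hVW j hB (w j))
    (sl_cv hWV j hB (w j)) (by rw [sl_card g hV j hB]; exact h2) (R := w)
    (mem_sl.2 ⟨w, hw, hwB, by simp⟩)
    (by
      intro h
      obtain ⟨v, hv, hvB, he⟩ := mem_sl.1 h
      refine hno v hv hvB ?_
      rw [← he]; exact off_update.symm)
  obtain ⟨Q, hQ, hQB, rfl⟩ := mem_sl.1 hq
  obtain ⟨Z, hZ, hZB, rfl⟩ := mem_sl.1 hz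
  obtain ⟨T, hT, hTB, rfl⟩ := mem_sl.1 ht
  have hkj : k ≠ j := by rintro rfl; simp at e2
  refine ⟨k, hkj, Q, hQ, Z, hZ, T, hT, hQB, hZB, hTB, ?_, ?_, ?_, by simpa [hkj] using e1,
    by simpa [hkj] using e2, by simpa [hkj] using e3, by simpa [hkj] using e4⟩
  · intro a haj hak; simpa [haj] using o1 a hak
  · intro a haj hak; simpa [haj] using o2 a hak
  · intro a haj hak; simpa [haj] using o3 a hak

structure Core (c : S → S) (V W : Finset (Fin d → S)) (j k : Fin d) (σ τ : S)
    (A A2 E E2 : Fin d → S) : Prop where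
  kj : k ≠ j
  ts : τ ≠ σ
  tcs : τ ≠ c σ
  hA : A ∈ V
  hA2 : A2 ∈ V
  hE : E ∈ W
  hE2 : E2 ∈ W
  Aj : A j = σ
  A2j : A2 j = σ
  Ej : E j = τ
  E2j : E2 j = τ
  A2k : A2 k = c (A k)
  E2k : E2 k = c (E k)
  oA : Off k A A2
  oE : Off k E E2
  oAE : Off2 j k A E
  Vs : ∀ v ∈ V, v j = σ → v = A ∨ v = A2
  Wt : ∀ w ∈ W, w j = τ → w = E ∨ w = E2
  Vt : ∀ v ∈ V, v j ≠ τ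
  Ws : ∀ w ∈ W, w j ≠ σ

theorem Core.symm (g : Good c) {V W : Finset (Fin d → S)} {j k : Fin d} {σ τ : S}
    {A A2 E E2 : Fin d → S} (h : Core c V W j k σ τ A A2 E E2) :
    Core c W V j k τ σ E E2 A A2 :=
  ⟨h.kj, h.ts.symm, g.flip h.tcs, h.hE, h.hE2, h.hA, h.hA2, h.Ej, h.E2j, h.Aj, h.A2j, h.E2k, h.A2k,
    h.oE, h.oA, h.oAE.symm, h.Wt, h.Vs, h.Ws, h.Vt⟩

theorem HS.mkCore (g : Good c) {V W : Finset (Fin d → S)} {PV PW : (Fin d → S) → Prop}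
    (h : HS c V W PV PW) {j : Fin d} {v w : Fin d → S} (hv : v ∈ V) (hw : w ∈ W)
    (h1 : w j ≠ v j) (h2 : w j ≠ c (v j)) {B : Set S} (hB : B ∈ ESet c) (hvB : c (v j) ∈ B)
    (hwB : w j ∈ B) (hcard : (flt V j B).card ≤ 2) (hcase : Off j v w ∨ K2 c V W) :
    ∃ j k σ τ A A2 E E2, Core c V W j k σ τ A A2 E E2 := by
  obtain ⟨k, hkj, Q, hQ, Z, hZ, T, hT, hQB, hZB, hTB, oQ, oZ, oT, e1, e2, e3, e4⟩ :=
    two' g h.hV h.hW h.hVW h.hWV hB hcard hw hwB (by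
      intro v2 hv2 hv2B ho
      rcases hcase with hc | hK
      · have hne : v ≠ v2 := by rintro rfl; exact ES_not' g hB hvB hv2B
        have ho2 : Off j v v2 := fun a ha => by rw [hc a ha, ho a ha]
        have : v2 j = c (v j) := by
          by_contra hh
          exact off_nd g ho2 hh (h.hV v hv v2 hv2 hne)
        exact h.star g hv hv2 hw ho2 this hc
      · exact hK v2 hv2 w hw (off_nd g ho (ES_ne g hB hv2B hwB)) j ho)
  have hQZ : Q ≠ Z := by rintro rfl; exact g.ne _ e1.symm
  have hwT : w ≠ T := by rintro rfl; exact g.ne _ e4.symm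
  have hpq : ∀ q, Occ V W j q → q ∈ B → q = c (v j) ∨ q = w j := by
    intro q hq hqB
    rcases h.pairs j (v j) (w j) q ⟨v, Or.inl hv, rfl⟩ ⟨w, Or.inr hw, rfl⟩ hq h1 h2 with
      hh | hh | hh | hh
    · rw [hh] at hqB; exact absurd hqB (ES_not' g hB hvB)
    · exact Or.inl hh
    · exact Or.inr hh
    · rw [hh] at hqB; exact absurd hqB (ES_not g hB hwB)
  have hQk : Q k ≠ c (w k) := by
    intro hh; rw [hh, g.inv] at e1; exact e3 e1
  have hZk : Z k ≠ c (w k) := by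
    intro hh; rw [hh] at e1; exact e2 (cinj g e1.symm)
  have hVl : ∀ U ∈ V, U j ∈ B → Off2 j k U w → U k ≠ w k → U k ≠ c (w k) → U j = c (v j) := by
    intro U hU hUB oU hk1 hk2
    rcases hcase with hc | hK
    · obtain ⟨y, hy, hyw⟩ := exists_pt g w
      obtain ⟨B', hB', b1, b2⟩ := g.ex2 (w k) (U k) hk2
      have hx : Pt c (Function.update y k B') := hy.upd hB'
      have hxw : Mt j (Function.update y k B') w := by
        intro a ha
        by_cases hak : a = k
        · subst hak; simpa using b1
        · simpa [hak] using hyw a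
      have hxU : Mt j (Function.update y k B') U := by
        intro a ha
        by_cases hak : a = k
        · subst hak; simpa using b2
        · rw [oU a ha hak]; simpa [hak] using hyw a
      rcases F1 g h.hV h.hVW h.hWV hv hx (i := j) (fun a ha => by rw [hc a ha]; exact hxw a ha) with
        ⟨w', hw', hwj, hxw'⟩ | ⟨u, hu, huj, hxu⟩
      · exfalso
        have := h.hW.eq_mt g hx hw' hw hxw' hxw (by rw [hwj]; exact h2)
        subst this
        exact h1 hwj
      · have := h.hV.eq_mt g hx hu hU hxu hxU (ES_ne g hB (by rw [huj]; exact hvB) hUB)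
        subst this
        exact huj
    · rcases hpq (U j) ⟨U, Or.inl hU, rfl⟩ hUB with hh | hh
      · exact hh
      · exfalso
        have ho := oU.off hh
        exact hK U hU w hw (off_nd g ho (g.flip hk2)) k ho
  have hQj := hVl Q hQ hQB oQ e2 hQk
  have hZj := hVl Z hZ hZB oZ e3 hZk
  have oQZ : Off k Q Z := (oQ.trans oZ.symm).off (by rw [hQj, hZj])
  have hTj : T j = w j := by
    rcases hpq (T j) ⟨T, Or.inr hT, rfl⟩ hTB with hh | hh
    · exfalso
      have oQT : Off k Q T := (oQ.trans oT.symm).off (by rw [hQj, hh])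
      exact h.star g hQ hZ hT oQZ e1 oQT
    · exact hh
  have hVB : ∀ u ∈ V, u j ∈ B → u = Q ∨ u = Z := fun u hu huB =>
    two_elems hcard (mem_flt.2 ⟨hQ, hQB⟩) (mem_flt.2 ⟨hZ, hZB⟩) (mem_flt.2 ⟨hu, huB⟩) hQZ
  have hWB : ∀ u ∈ W, u j ∈ B → u = w ∨ u = T := fun u hu huB =>
    two_elems (by rw [← flt_eq g h.hV h.hW h.hVW h.hWV j hB]; exact hcard)
      (mem_flt.2 ⟨hw, hwB⟩) (mem_flt.2 ⟨hT, hTB⟩) (mem_flt.2 ⟨hu, huB⟩) hwT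
  refine ⟨j, k, c (v j), w j, Q, Z, w, T, hkj, h2, ?_, hQ, hZ, hw, hT, hQj, hZj, rfl, hTj, e1, e4,
    oQZ, (oT.off hTj).symm, oQ, ?_, ?_, ?_, ?_⟩
  · rw [g.inv]; exact h1
  · intro u hu huj; exact hVB u hu (by rw [huj]; exact hvB)
  · intro u hu huj; exact hWB u hu (by rw [huj]; exact hwB)
  · intro u hu huj
    rcases hVB u hu (by rw [huj]; exact hwB) with rfl | rfl
    · exact h2 (by rw [← huj, hQj])
    · exact h2 (by rw [← huj, hZj])
  · intro u hu huj
    rcases hWB u hu (by rw [huj]; exact hvB) with rfl | rfl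
    · exact h2 huj
    · exact h2 (by rw [← huj, hTj])

theorem HS.exCore_aux (g : Good c) {V W : Finset (Fin d → S)} {PV PW : (Fin d → S) → Prop}
    (h : HS c V W PV PW) {j : Fin d} {v w : Fin d → S} (hv : v ∈ V) (hw : w ∈ W)
    (h1 : w j ≠ v j) (h2 : w j ≠ c (v j)) (hcase : Off j v w ∨ K2 c V W) :
    ∃ j k σ τ A A2 E E2, Core c V W j k σ τ A A2 E E2 := by
  obtain ⟨B, hB, b1, b2⟩ := g.ex2 (c (v j)) (w j) (by rw [g.inv]; exact h1)
  have e1 := flt_card g V j (B := B)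
  have e2 := h.h5
  by_cases hc : (flt V j B).card ≤ 2
  · exact h.mkCore g hv hw h1 h2 hB b1 b2 hc hcase
  · have hBc := ES_compl g hB
    obtain ⟨j, k, σ, τ, A, A2, E, E2, hC⟩ := (h.symm g).mkCore g hw hv h1.symm (g.flip h2) hBc
      (ES_not g hB b2) (ES_not' g hB b1)
      (by rw [← flt_eq g h.hV h.hW h.hVW h.hWV j hBc]; omega)
      (by
        rcases hcase with hh | hh
        · exact Or.inl hh.symm
        · exact Or.inr (hh.symm g))
    exact ⟨j, k, τ, σ, E, E2, A, A2, hC.symm g⟩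

theorem HS.exCore (g : Good c) {V W : Finset (Fin d → S)} {PV PW : (Fin d → S) → Prop}
    (h : HS c V W PV PW) : ∃ j k σ τ A A2 E E2, Core c V W j k σ τ A A2 E E2 := by
  by_cases hK : K2 c V W
  · obtain ⟨v, hv⟩ := h.ne
    obtain ⟨x, hx, hxv⟩ := exists_pt g v
    obtain ⟨w, hw, hxw⟩ := h.hVW x hx ⟨v, hv, hxv⟩
    have hne : w ≠ v := by rintro rfl; exact h.dis w hv hw
    obtain ⟨j, hj⟩ := Function.ne_iff.1 hne
    exact h.exCore_aux g hv hw hj (ES_ne g (hx j) (hxv j) (hxw j)) (Or.inr hK)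
  · have : ∃ v ∈ V, ∃ w ∈ W, ¬ Dichotomous c v w ∧ ∃ a, Off a v w := by
      simpa [K2, and_assoc] using hK
    obtain ⟨v, hv, w, hw, hd, a, ha⟩ := this
    exact h.exCore_aux g hv hw (j := a)
      (fun hh => h.dis v hv (by rw [ha.eq hh.symm]; exact hw)) (fun hh => hd ⟨a, hh⟩) (Or.inl ha)

end

section
variable {S : Type*} {c : S → S} {d : ℕ}

theorem cls2 (g : Good c) (X : Finset (Fin d → S)) (i : Fin d) {r p : S} (h1 : p ≠ r)
    (h2 : p ≠ c r) :
    (cls X i r).card + (cls X i (c r)).card + (cls X i (c p)).card ≤ X.card := by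
  classical
  simp only [cls, Finset.card_filter, ← Finset.sum_add_distrib]
  rw [Finset.card_eq_sum_ones]
  apply Finset.sum_le_sum
  intro v _
  have := g.flip h2
  have k1 : c p ≠ c r := fun h => h1 (cinj g h)
  have := g.ne r
  have := g.ne p
  generalize v i = z
  by_cases e1 : z = r
  · subst e1; simp_all [eq_comm]
  by_cases e2 : z = c r
  · subst e2; simp_all [eq_comm]
  simp [e1, e2]
  split_ifs <;> omega

variable {V W : Finset (Fin d → S)} {PV PW : (Fin d → S) → Prop}
  {j k : Fin d} {σ τ : S} {A A2 E E2 : Fin d → S}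

/-- points matched by the opposite class lie in the central region or in `W` -/
theorem Core.regA (g : Good c) (h : HS c V W PV PW) (hC : Core c V W j k σ τ A A2 E E2)
    {U : Fin d → S} (hU : U ∈ V) (hUj : U j = c σ) {x : Fin d → Set S} (hx : Pt c x)
    (hxU : Mt j x U) :
    (∃ Z ∈ W, Z j = c σ ∧ Mt j x Z) ∨ ∀ a, a ≠ j → a ≠ k → A a ∈ x a := by
  rcases F1 g h.hV h.hVW h.hWV hU hx hxU with ⟨w, hw, hwj, hxw⟩ | ⟨u, hu, huj, hxu⟩
  · exact Or.inl ⟨w, hw, by rw [hwj, hUj], hxw⟩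
  · right
    rw [hUj, g.inv] at huj
    intro a haj hak
    rcases hC.Vs u hu huj with rfl | rfl
    · exact hxu a haj
    · rw [hC.oA a hak]; exact hxu a haj

theorem Core.regC (g : Good c) (h : HS c V W PV PW) (hC : Core c V W j k σ τ A A2 E E2)
    {Z : Fin d → S} (hZ : Z ∈ W) (hZj : Z j = c σ) {x : Fin d → Set S} (hx : Pt c x)
    (hxZ : Mt j x Z) : ∃ U ∈ V, U j = c σ ∧ Mt j x U := by
  rcases F1 g h.hW h.hWV h.hVW hZ hx hxZ with ⟨w, hw, hwj, hxw⟩ | ⟨u, hu, huj, hxu⟩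
  · exact ⟨w, hw, by rw [hwj, hZj], hxw⟩
  · rw [hZj, g.inv] at huj
    exact absurd huj (hC.Ws u hu)

theorem mt_of_upd {x : Fin d → Set S} {v : Fin d → S} {j e : Fin d} {B : Set S}
    (h : ∀ a, a ≠ j → a ≠ e → v a ∈ x a) (he : v e ∈ B) : Mt j (Function.update x e B) v := by
  intro a ha
  by_cases hae : a = e
  · subst hae; simpa using he
  · simpa [hae] using h a ha hae

theorem Core.noZ (g : Good c) (h : HS c V W PV PW) (hC : Core c V W j k σ τ A A2 E E2)
    (h1 : (cls W j (c σ)).card ≤ 1) : ∀ Z ∈ W, Z j ≠ c σ := by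
  intro Z hZ hZj
  have hun : ∀ w ∈ W, w j = c σ → w = Z := fun w hw hwj =>
    Finset.card_le_one.1 h1 w (mem_cls.2 ⟨hw, hwj⟩) Z (mem_cls.2 ⟨hZ, hZj⟩)
  -- the separating coordinate
  have hsep : ∃ e, e ≠ j ∧ e ≠ k ∧ Z e = c (A e) := by
    have hEZ : ∀ e, E j = τ → Z e = c (E e) → e ≠ j := by
      rintro e he hh rfl
      rw [he, hZj] at hh
      exact hC.ts (cinj g hh).symm
    have hne : ∀ F : Fin d → S, F j = τ → F ≠ Z := by
      rintro F hF rfl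
      exact hC.tcs (by rw [← hF, hZj])
    obtain ⟨e1, he1⟩ := h.hW E hC.hE Z hZ (hne E hC.Ej)
    obtain ⟨e2, he2⟩ := h.hW E2 hC.hE2 Z hZ (hne E2 hC.E2j)
    have n1 : e1 ≠ j := by
      rintro rfl; rw [hC.Ej, hZj] at he1; exact hC.ts (cinj g he1).symm
    have n2 : e2 ≠ j := by
      rintro rfl; rw [hC.E2j, hZj] at he2; exact hC.ts (cinj g he2).symm
    by_cases k1 : e1 = k
    · by_cases k2 : e2 = k
      · exfalso
        subst k1; subst k2
        rw [hC.E2k, g.inv, he1] at he2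
        exact g.ne _ he2
      · exact ⟨e2, n2, k2, by rw [he2, ← hC.oE e2 k2, hC.oAE e2 n2 k2]⟩
    · exact ⟨e1, n1, k1, by rw [he1, hC.oAE e1 n1 k1]⟩
  obtain ⟨e, hej, hek, hZe⟩ := hsep
  have hcl : ∀ U ∈ V, U j = c σ → ∀ x, Pt c x → Mt j x Z → Mt j x U → Off e U Z := by
    intro U hU hUj x hx hxZ hxU a ha
    by_contra hne
    have haj : a ≠ j := by
      rintro rfl; exact hne (by rw [hUj, hZj])
    obtain ⟨B, hB, b1, b2⟩ := g.ex2 (U a) (c (Z a)) (fun hh => hne (cinj g hh).symm)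
    have hy : Pt c (Function.update x a B) := hx.upd hB
    have hyU : Mt j (Function.update x a B) U := mt_of_upd (fun b hb _ => hxU b hb) b1
    rcases hC.regA g h hU hUj hy hyU with ⟨Z', hZ', hZj', hyZ⟩ | hG
    · have := hun Z' hZ' hZj'
      subst this
      have := hyZ a haj
      simp only [Function.update_self] at this
      exact ES_not' g hB b2 this
    · have h3 := hG e hej hek
      have h4 := hxZ e hej
      rw [Function.update_of_ne (Ne.symm ha)] at h3
      rw [hZe] at h4
      exact ES_not g (hx e) h3 h4
  obtain ⟨x, hx, hxZ⟩ := exists_pt g Z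
  obtain ⟨U1, hU1, hU1j, hxU1⟩ := hC.regC g h hZ hZj hx (hxZ.mt j)
  have o1 := hcl U1 hU1 hU1j x hx (hxZ.mt j) hxU1
  have hne1 : U1 e ≠ Z e := fun hh => h.dis U1 hU1 (by rw [o1.eq hh]; exact hZ)
  obtain ⟨B, hB, b1, b2⟩ := g.ex2 (Z e) (c (U1 e)) (fun hh => hne1 (cinj g hh))
  have hy : Pt c (Function.update x e B) := hx.upd hB
  have hyZ : Mt j (Function.update x e B) Z := mt_of_upd (fun b hb _ => hxZ b) b1
  obtain ⟨U2, hU2, hU2j, hyU2⟩ := hC.regC g h hZ hZj hy hyZ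
  have o2 := hcl U2 hU2 hU2j _ hy hyZ hyU2
  have hne : U1 ≠ U2 := by
    rintro rfl
    have := hyU2 e hej
    simp only [Function.update_self] at this
    exact ES_not' g hB b2 this
  have o12 : Off e U1 U2 := fun a ha => by rw [o1 a ha, o2 a ha]
  have hk : U2 e = c (U1 e) := by
    by_contra hh
    exact off_nd g o12 hh (h.hV U1 hU1 U2 hU2 hne)
  exact h.star g hU1 hU2 hZ o12 hk o1

theorem cls_pair (g : Good c) {X : Finset (Fin d → S)} {A A2 : Fin d → S} (hA : A ∈ X)
    (hA2 : A2 ∈ X) (hj : A j = σ) (hj2 : A2 j = σ) (hne : A ≠ A2)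
    (h : ∀ v ∈ X, v j = σ → v = A ∨ v = A2) : (cls X j σ).card = 2 := by
  classical
  have : cls X j σ = {A, A2} := by
    ext v
    rw [mem_cls]
    simp only [Finset.mem_insert, Finset.mem_singleton]
    constructor
    · rintro ⟨h1, h2⟩; exact h v h1 h2
    · rintro (rfl | rfl)
      · exact ⟨hA, hj⟩
      · exact ⟨hA2, hj2⟩
  rw [this, Finset.card_pair hne]

theorem cls_empty {X : Finset (Fin d → S)} (h : ∀ v ∈ X, v j ≠ σ) : (cls X j σ).card = 0 := by
  rw [Finset.card_eq_zero]
  apply Finset.eq_empty_of_forall_notMem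
  intro v hv
  rw [mem_cls] at hv
  exact h v hv.1 hv.2

theorem upd_of_off {u v : Fin d → S} {s : S} (h : Off k u v) (hk : v k = s) :
    Function.update u k s = v := by
  funext a
  by_cases ha : a = k
  · subst ha; simp [hk]
  · simp [ha, h a ha]

/-- of two twins choose the coloured one -/
theorem HS.pick (g : Good c) (h : HS c V W PV PW) {A A2 : Fin d → S} (hA : A ∈ V) (hA2 : A2 ∈ V)
    (ho : Off k A A2) (hk : A2 k = c (A k)) :
    ∃ u ∈ V, (u = A ∨ u = A2) ∧ PV u ∧ Function.update u k (c (u k)) ∈ V ∧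
      ¬ PV (Function.update u k (c (u k))) ∧ (PV A → u = A) ∧ (PV A2 → u = A2) := by
  have ht := h.tV A hA A2 hA2 ⟨k, hk, ho⟩
  have e1 : Function.update A k (c (A k)) = A2 := upd_of_off ho hk
  have e2 : Function.update A2 k (c (A2 k)) = A :=
    upd_of_off ho.symm (by rw [hk, g.inv])
  by_cases hP : PV A
  · refine ⟨A, hA, Or.inl rfl, hP, ?_, ?_, fun _ => rfl, fun hh => absurd hh (ht.1 hP)⟩
    · rw [e1]; exact hA2
    · rw [e1]; exact ht.1 hP
  · have hP2 : PV A2 := by tauto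
    refine ⟨A2, hA2, Or.inr rfl, hP2, ?_, ?_, fun hh => absurd hh hP, fun _ => rfl⟩
    · rw [e2]; exact hA
    · rw [e2]; exact hP

theorem HS.out (g : Good c) (h : HS c V W PV PW) :
    ∃ j k, k ≠ j ∧ ∃ u1 ∈ V, ∃ u2 ∈ V, PV u1 ∧ PV u2 ∧ u2 j = c (u1 j) ∧ u1 k ≠ u2 k ∧
      Off2 j k u1 u2 ∧ (∀ u ∈ V, PV u → u = u1 ∨ u = u2) ∧
      Function.update u1 k (c (u1 k)) ∈ V ∧ ¬ PV (Function.update u1 k (c (u1 k))) ∧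
      Function.update u2 k (c (u2 k)) ∈ V ∧ ¬ PV (Function.update u2 k (c (u2 k))) := by
  classical
  obtain ⟨j, k, σ, τ, A, A2, E, E2, hC⟩ := h.exCore g
  have hAne : A ≠ A2 := by rintro rfl; exact g.ne _ hC.A2k.symm
  have hEne : E ≠ E2 := by rintro rfl; exact g.ne _ hC.E2k.symm
  have n1 := cls_pair g hC.hA hC.hA2 hC.Aj hC.A2j hAne hC.Vs
  have n2 := cls_pair g hC.hE hC.hE2 hC.Ej hC.E2j hEne hC.Wt
  have n3 := cls_empty hC.Vt
  have n4 := cls_empty hC.Ws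
  have r1 := card_rel g h.hV h.hW h.hVW h.hWV j σ
  have r2 := card_rel g h.hV h.hW h.hVW h.hWV j τ
  have r3 := cls2 g V j hC.ts hC.tcs
  have r4 := h.h5
  have z1 := hC.noZ g h (by omega)
  have z2 := (hC.symm g).noZ g (h.symm g) (by omega)
  have n5 := cls_empty z1
  have hc2 : (cls V j (c σ)).card = 2 := by omega
  obtain ⟨C, C2, hCne, hCC⟩ := Finset.card_eq_two.1 hc2
  have hCm : C ∈ cls V j (c σ) := by rw [hCC]; simp
  have hC2m : C2 ∈ cls V j (c σ) := by rw [hCC]; simp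
  have hCs : ∀ v ∈ V, v j = c σ → v = C ∨ v = C2 := by
    intro v hv hvj
    have : v ∈ cls V j (c σ) := mem_cls.2 ⟨hv, hvj⟩
    rw [hCC] at this
    simpa using this
  rw [mem_cls] at hCm hC2m
  have hG : ∀ U ∈ V, U j = c σ → Off2 j k U A := by
    intro U hU hUj a haj hak
    by_contra hne
    obtain ⟨x, hx, hxU⟩ := exists_pt g U
    obtain ⟨B, hB, b1, b2⟩ := g.ex2 (U a) (c (A a)) (fun hh => hne (cinj g hh).symm)
    rcases hC.regA g h hU hUj (hx.upd (i := a) hB) (mt_of_upd (fun b _ _ => hxU b) b1) with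
      ⟨Z, hZ, hZj, -⟩ | hh
    · exact z1 Z hZ hZj
    · have := hh a haj hak
      simp only [Function.update_self] at this
      exact ES_not' g hB b2 this
  have oC := hG C hCm.1 hCm.2
  have oC2 := hG C2 hC2m.1 hC2m.2
  have oCC : Off k C C2 := (oC.trans oC2.symm).off (by rw [hCm.2, hC2m.2])
  have hCk : C2 k = c (C k) := by
    by_contra hh
    exact off_nd g oCC hh (h.hV C hCm.1 C2 hC2m.1 hCne)
  obtain ⟨u1, hu1, hu1e, hP1, f1, f1', p1, p1'⟩ := h.pick g hC.hA hC.hA2 hC.oA hC.A2k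
  obtain ⟨u2, hu2, hu2e, hP2, f2, f2', p2, p2'⟩ := h.pick g hCm.1 hC2m.1 oCC hCk
  have hu1j : u1 j = σ := by
    rcases hu1e with rfl | rfl
    · exact hC.Aj
    · exact hC.A2j
  have hu2j : u2 j = c σ := by
    rcases hu2e with rfl | rfl
    · exact hCm.2
    · exact hC2m.2
  have ho : Off2 j k u1 u2 := by
    have o2 := hG u2 hu2 hu2j
    rcases hu1e with rfl | rfl
    · exact o2.symm
    · intro a haj hak
      rw [o2 a haj hak, hC.oA a hak]
  refine ⟨j, k, hC.kj, u1, hu1, u2, hu2, hP1, hP2, by rw [hu1j, hu2j], ?_, ho, ?_, f1, f1', f2, f2'⟩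
  · intro hk
    have := h.tV u1 hu1 u2 hu2 ⟨j, by rw [hu1j, hu2j], fun a ha => by
      by_cases hak : a = k
      · rw [hak, hk]
      · exact ho a ha hak⟩
    tauto
  · intro u hu hPu
    rcases h.pairs j σ τ (u j) ⟨A, Or.inl hC.hA, hC.Aj⟩ ⟨E, Or.inr hC.hE, hC.Ej⟩
      ⟨u, Or.inl hu, rfl⟩ hC.ts hC.tcs with hh | hh | hh | hh
    · left
      rcases hC.Vs u hu hh with rfl | rfl
      · exact (p1 hPu).symm
      · exact (p1' hPu).symm
    · right
      rcases hCs u hu hh with rfl | rfl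
      · exact (p2 hPu).symm
      · exact (p2' hPu).symm
    · exact absurd hh (hC.Vt u hu)
    · exact absurd hh (z2 u hu)

end

section
variable {S : Type*} {c : S → S} {d : ℕ}

theorem col_iff (g : Good c) {V : Finset (Fin d → S)} (hV : Code c V) {i : Fin d} {B : Set S}
    (hB : B ∈ ESet c) {s : S} (hs : s ∈ B) {v : Fin d → S} (hv : v ∈ V) (hvB : v i ∈ B) :
    Function.update v i s ∈ V ↔ v i = s := by
  constructor
  · intro h
    have := upd_inj g hV hB (s := s) h hv (by simpa using hs) hvB (by simp)
    rw [← this]; simp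
  · rintro rfl; simpa using hv

theorem off_of_upd {u v : Fin d → S} {i a : Fin d} {s : S} (huv : u i = v i)
    (h : Off a (Function.update u i s) (Function.update v i s)) : Off a u v := by
  intro b hb
  by_cases hbi : b = i
  · rw [hbi, huv]
  · simpa [hbi] using h b hb

theorem twin_aux (g : Good c) {V : Finset (Fin d → S)} (hV : Code c V) (hT : TF c V) {i : Fin d}
    {B : Set S} (hB : B ∈ ESet c) {s t : S} (hs : s ∈ B) (hts : t ≠ s)
    (hl : ∀ v ∈ V, v i ∈ B → v i = s ∨ v i = t) :
    ∀ u ∈ sl V i B s, ∀ v ∈ sl V i B s, TwinPair c u v → (u ∈ V ↔ ¬ v ∈ V) := by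
  intro u hu v hv huv
  obtain ⟨u, hu0, huB, rfl⟩ := mem_sl.1 hu
  obtain ⟨v, hv0, hvB, rfl⟩ := mem_sl.1 hv
  rw [col_iff g hV hB hs hu0 huB, col_iff g hV hB hs hv0 hvB]
  have hne : u i ≠ v i := by
    intro he
    obtain ⟨j, hj, hj'⟩ := huv
    have hji : j ≠ i := by
      rintro rfl; simp at hj; exact g.ne _ hj.symm
    exact hT u hu0 v hv0 ⟨j, by simpa [hji] using hj, off_of_upd he hj'⟩
  rcases hl u hu0 huB with h1 | h1 <;> rcases hl v hv0 hvB with h2 | h2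
  · exact absurd (h1.trans h2.symm) hne
  · simp [h1, h2, hts]
  · simp [h1, h2, hts]
  · exact absurd (h1.trans h2.symm) hne

theorem occ_sl {V W : Finset (Fin d → S)} {i a : Fin d} {B : Set S} {s q : S} (ha : a ≠ i)
    (h : Occ (sl V i B s) (sl W i B s) a q) : Occ V W a q := by
  obtain ⟨u, hu, rfl⟩ := h
  rcases hu with hu | hu
  · obtain ⟨v, hv, -, rfl⟩ := mem_sl.1 hu
    exact ⟨v, Or.inl hv, by simp [ha]⟩
  · obtain ⟨v, hv, -, rfl⟩ := mem_sl.1 hu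
    exact ⟨v, Or.inr hv, by simp [ha]⟩

theorem occ_sl_i {V W : Finset (Fin d → S)} {i : Fin d} {B : Set S} {s q : S}
    (h : Occ (sl V i B s) (sl W i B s) i q) : q = s := by
  obtain ⟨u, hu, rfl⟩ := h
  rcases hu with hu | hu <;> obtain ⟨v, hv, -, rfl⟩ := mem_sl.1 hu <;> simp

theorem half_HS (g : Good c) {V W : Finset (Fin d → S)} (hV : Code c V) (hW : Code c W)
    (hTV : TF c V) (hTW : TF c W) (hVW : Cv c V W) (hWV : Cv c W V) (hK : K2 c V W)
    (hn : V.card ≤ 11) {i : Fin d} {B : Set S} (hB : B ∈ ESet c) {s t : S} (hs : s ∈ B)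
    (hts : t ≠ s) (hl : ∀ q, Occ V W i q → q ∈ B → q = s ∨ q = t)
    (h5 : (flt V i B).card ≤ 5) (h0 : (flt V i B).Nonempty) :
    HS c (sl V i B s) (sl W i B s) (fun u => u ∈ V) (fun u => u ∈ W) where
  hV := sl_code g hV i hB s
  hW := sl_code g hW i hB s
  hVW := sl_cv hVW i hB s
  hWV := sl_cv hWV i hB s
  ne := by rw [← Finset.card_pos, sl_card g hV i hB, Finset.card_pos]; exact h0
  h5 := by rw [sl_card g hV i hB]; exact h5
  tV := twin_aux g hV hTV hB hs hts (fun v hv hvB => hl _ ⟨v, Or.inl hv, rfl⟩ hvB)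
  tW := twin_aux g hW hTW hB hs hts (fun v hv hvB => hl _ ⟨v, Or.inr hv, rfl⟩ hvB)
  dis := by
    intro v hv hw
    obtain ⟨v, hv0, hvB, rfl⟩ := mem_sl.1 hv
    obtain ⟨w, hw0, hwB, he⟩ := mem_sl.1 hw
    have ho : Off i v w := by
      intro a ha
      have := congrFun he a
      simp [ha] at this
      exact this.symm
    exact hK v hv0 w hw0 (off_nd g ho (ES_ne g hB hvB hwB)) i ho
  col := by
    intro v hv w hw hd a ha
    obtain ⟨v, hv0, hvB, rfl⟩ := mem_sl.1 hv
    obtain ⟨w, hw0, hwB, rfl⟩ := mem_sl.1 hw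
    rw [col_iff g hV hB hs hv0 hvB, col_iff g hW hB hs hw0 hwB]
    have hne : v i ≠ w i := by
      intro he
      exact hK v hv0 w hw0 (fun hh => hd (sl_dich g hB hvB hwB s hh)) a (off_of_upd he ha)
    rcases hl _ ⟨v, Or.inl hv0, rfl⟩ hvB with h1 | h1 <;>
      rcases hl _ ⟨w, Or.inr hw0, rfl⟩ hwB with h2 | h2
    · exact absurd (h1.trans h2.symm) hne
    · simp [h1, h2, hts]
    · simp [h1, h2, hts]
    · exact absurd (h1.trans h2.symm) hne
  pairs := by
    intro a r p q hr hp hq h1 h2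
    by_cases ha : a = i
    · subst ha
      exact absurd ((occ_sl_i hp).trans (occ_sl_i hr).symm) h1
    · exact twopairs g hV hW hTV hTW hVW hWV hK hn a (occ_sl ha hr) (occ_sl ha hp) (occ_sl ha hq)
        h1 h2

/-- description of the class of `s` coming from one half -/
def HalfOut (c : S → S) (V : Finset (Fin d → S)) (i : Fin d) (s t : S) (j k : Fin d)
    (u1 u2 : Fin d → S) : Prop :=
  k ≠ j ∧ k ≠ i ∧ (u1 ∈ V ∧ u1 i = s) ∧ (u2 ∈ V ∧ u2 i = s) ∧ u2 j = c (u1 j) ∧ u1 k ≠ u2 k ∧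
    Off2 j k u1 u2 ∧ (∀ u ∈ V, u i = s → u = u1 ∨ u = u2) ∧
    Function.update (Function.update u1 k (c (u1 k))) i t ∈ V ∧
    Function.update (Function.update u2 k (c (u2 k))) i t ∈ V

theorem half_out (g : Good c) {V W : Finset (Fin d → S)} (hV : Code c V) (hW : Code c W)
    (hTV : TF c V) (hTW : TF c W) (hVW : Cv c V W) (hWV : Cv c W V) (hK : K2 c V W)
    (hn : V.card ≤ 11) {i : Fin d} {B : Set S} (hB : B ∈ ESet c) {s t : S} (hs : s ∈ B)
    (hts : t ≠ s) (hl : ∀ q, Occ V W i q → q ∈ B → q = s ∨ q = t)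
    (h5 : (flt V i B).card ≤ 5) (h0 : (flt V i B).Nonempty) :
    ∃ j k u1 u2, HalfOut c V i s t j k u1 u2 := by
  have h := half_HS g hV hW hTV hTW hVW hWV hK hn hB hs hts hl h5 h0
  obtain ⟨j, k, hkj, u1, hu1, u2, hu2, P1, P2, e1, e2, ho, hall, f1, f1', f2, f2'⟩ := h.out g
  have hi : ∀ u ∈ sl V i B s, u i = s := by
    intro u hu
    obtain ⟨v, hv, -, rfl⟩ := mem_sl.1 hu
    simp
  have hki : k ≠ i := by
    rintro rfl
    have h1 := hi _ f1
    have h2 := hi _ hu1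
    simp only [Function.update_self] at h1
    rw [h2] at h1
    exact g.ne _ h1
  have ht : ∀ u ∈ sl V i B s, u ∉ V → Function.update u i t ∈ V := by
    intro u hu hun
    obtain ⟨v, hv, hvB, rfl⟩ := mem_sl.1 hu
    rw [col_iff g hV hB hs hv hvB] at hun
    rcases hl _ ⟨v, Or.inl hv, rfl⟩ hvB with hh | hh
    · exact absurd hh hun
    · rw [← hh]; simpa using hv
  refine ⟨j, k, u1, u2, hkj, hki, ⟨P1, hi _ hu1⟩, ⟨P2, hi _ hu2⟩, e1, e2, ho, ?_, ht _ f1 f1', ht _ f2 f2'⟩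
  intro u hu hus
  refine hall u (mem_sl.2 ⟨u, hu, by rw [hus]; exact hs, ?_⟩) hu
  rw [← hus, Function.update_eq_self]

theorem HalfOut.swap (g : Good c) {V : Finset (Fin d → S)} {i j k : Fin d} {s t : S}
    {u1 u2 : Fin d → S} (h : HalfOut c V i s t j k u1 u2) : HalfOut c V i s t j k u2 u1 := by
  obtain ⟨h1, h2, h3, h4, h5, h6, h7, h8, h9, h10⟩ := h
  exact ⟨h1, h2, h4, h3, by rw [h5, g.inv], h6.symm, h7.symm, fun u hu hs => (h8 u hu hs).symm,
    h10, h9⟩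

theorem HalfOut.clash (g : Good c) {V : Finset (Fin d → S)} (hT : TF c V) {i j k j' k' : Fin d}
    {s t : S} {u1 u2 : Fin d → S} (h : HalfOut c V i s t j k u1 u2)
    (h' : HalfOut c V i s (c t) j' k' u1 u2) : False := by
  obtain ⟨h1, h2, h3, h4, h5, h6, h7, h8, h9, h10⟩ := h
  obtain ⟨l1, l2, l3, l4, l5, l6, l7, l8, l9, l10⟩ := h'
  have hj : u1 j ≠ u2 j := by rw [h5]; exact (g.ne _).symm
  have hj' : u1 j' ≠ u2 j' := by rw [l5]; exact (g.ne _).symm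
  have tw : ∀ u : Fin d → S, Function.update u i t ∈ V → Function.update u i (c t) ∈ V → False := by
    intro u hu hu'
    refine hT _ hu _ hu' ⟨i, by simp, fun a ha => by simp [ha]⟩
  have m : ∀ a, u1 a ≠ u2 a → a = j ∨ a = k := by
    intro a ha
    by_contra hh
    push Not at hh
    exact ha (h7 a hh.1 hh.2)
  rcases m k' l6 with hk | hk
  · rcases m j' hj' with hjj | hjj
    · exact l1 (hk.trans hjj.symm)
    · subst hk; subst hjj
      have : Function.update u1 j' (c (u1 j')) = Function.update u2 k' (c (u2 k')) := by
        funext a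
        by_cases ha : a = k'
        · subst ha
          simp [h1.symm, h5, g.inv]
        · by_cases hb : a = j'
          · subst hb
            simp [h1, l5]
          · simp [ha, hb]
            exact h7 a ha hb
      rw [this] at h9
      exact tw _ h9 l10
  · subst hk
    exact tw _ h9 l9

theorem two_halves (g : Good c) {V W : Finset (Fin d → S)} (hV : Code c V) (hW : Code c W)
    (hTV : TF c V) (hTW : TF c W) (hVW : Cv c V W) (hWV : Cv c W V) (hK : K2 c V W)
    (hn : V.card ≤ 11) {i : Fin d} {s t : S} (hts : t ≠ s) (htcs : t ≠ c s)
    (hl : ∀ q, Occ V W i q → q = s ∨ q = c s ∨ q = t ∨ q = c t)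
    (hs : ∀ B ∈ ESet c, (flt V i B).Nonempty) {B1 B2 : Set S} (hB1 : B1 ∈ ESet c)
    (hB2 : B2 ∈ ESet c) (hs1 : s ∈ B1) (ht1 : t ∈ B1) (hs2 : s ∈ B2) (ht2 : c t ∈ B2)
    (h1 : (flt V i B1).card ≤ 5) (h2 : (flt V i B2).card ≤ 5) : False := by
  have aux : ∀ t', t' ≠ s → (t' = t ∨ t' = c t) → ∀ B ∈ ESet c, s ∈ B → t' ∈ B →
      (flt V i B).card ≤ 5 → ∃ j k u1 u2, HalfOut c V i s t' j k u1 u2 := by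
    intro t' h2 h4 B hB b1 b2 h1
    refine half_out g hV hW hTV hTW hVW hWV hK hn hB b1 h2 ?_ h1 (hs B hB)
    · intro q hq hqB
      rcases hl q hq with hh | hh | hh | hh
      · exact Or.inl hh
      · rw [hh] at hqB; exact absurd hqB (ES_not g hB b1)
      · rcases h4 with h4 | h4
        · exact Or.inr (hh.trans h4.symm)
        · rw [hh] at hqB; rw [h4] at b2; exact absurd hqB (ES_not' g hB b2)
      · rcases h4 with h4 | h4
        · rw [hh] at hqB; rw [h4] at b2; exact absurd hqB (ES_not g hB b2)
        · exact Or.inr (hh.trans h4.symm)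
  obtain ⟨j, k, u1, u2, H⟩ := aux t hts (Or.inl rfl) B1 hB1 hs1 ht1 h1
  obtain ⟨j', k', y1, y2, H'⟩ := aux (c t) (fun hh => g.flip htcs hh.symm)
    (Or.inr rfl) B2 hB2 hs2 ht2 h2
  have hne : y1 ≠ y2 := by
    rintro rfl; exact H'.2.2.2.2.2.1 rfl
  have a1 := H.2.2.2.2.2.2.2.1 y1 H'.2.2.1.1 H'.2.2.1.2
  have a2 := H.2.2.2.2.2.2.2.1 y2 H'.2.2.2.1.1 H'.2.2.2.1.2
  rcases a1 with rfl | rfl <;> rcases a2 with rfl | rfl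
  · exact hne rfl
  · exact H.clash g hTV H'
  · exact H.clash g hTV (H'.swap g)
  · exact hne rfl

theorem caseB (g : Good c) {V W : Finset (Fin d → S)} (hV : Code c V) (hW : Code c W)
    (hTV : TF c V) (hTW : TF c W) (hVW : Cv c V W) (hWV : Cv c W V) (hK : K2 c V W)
    (hdis : ∀ v ∈ V, v ∉ W) (h0 : V.Nonempty) : 12 ≤ V.card := by
  by_contra hlt
  have hn : V.card ≤ 11 := by omega
  obtain ⟨v, hv⟩ := h0
  obtain ⟨x, hx, hxv⟩ := exists_pt g v
  obtain ⟨w, hw, hxw⟩ := hVW x hx ⟨v, hv, hxv⟩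
  have hne : w ≠ v := by rintro rfl; exact hdis w hv hw
  obtain ⟨i, hi⟩ := Function.ne_iff.1 hne
  have hic : w i ≠ c (v i) := ES_ne g (hx i) (hxv i) (hxw i)
  have hl : ∀ q, Occ V W i q → q = v i ∨ q = c (v i) ∨ q = w i ∨ q = c (w i) := fun q hq =>
    twopairs g hV hW hTV hTW hVW hWV hK hn i ⟨v, Or.inl hv, rfl⟩ ⟨w, Or.inr hw, rfl⟩ hq hi hic
  have hv' : ∃ u ∈ V, u i = c (v i) := by
    rcases F1 g hV hVW hWV (i := i) hv hx (hxv.mt i) with ⟨w', hw', hwi, hxw'⟩ | ⟨u, hu, hui, -⟩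
    · have := hW.eq_mt g hx hw' hw hxw' (hxw.mt i) (by rw [hwi]; exact hic)
      exact absurd (by rw [← this, hwi]) hi
    · exact ⟨u, hu, hui⟩
  obtain ⟨u, hu, hui⟩ := hv'
  have hs : ∀ B ∈ ESet c, (flt V i B).Nonempty := by
    intro B hB
    by_cases hb : v i ∈ B
    · exact ⟨v, mem_flt.2 ⟨hv, hb⟩⟩
    · refine ⟨u, mem_flt.2 ⟨hu, ?_⟩⟩
      rw [hui]
      by_contra hh
      exact hb ((hB _).2 hh)
  obtain ⟨B1, hB1, a1, a2⟩ := g.ex2 (v i) (w i) hic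
  obtain ⟨B2, hB2, b1, b2⟩ := g.ex2 (v i) (c (w i)) (fun hh => hi (cinj g hh))
  have hC1 := ES_compl g hB1
  have hC2 := ES_compl g hB2
  have a3 : c (v i) ∈ B1ᶜ := ES_not g hB1 a1
  have a4 : c (w i) ∈ B1ᶜ := ES_not g hB1 a2
  have b3 : c (v i) ∈ B2ᶜ := ES_not g hB2 b1
  have b4 : w i ∈ B2ᶜ := ES_not' g hB2 b2
  have e1 := flt_card g V i (B := B1)
  have e2 := flt_card g V i (B := B2)
  by_cases c1 : (flt V i B1).card ≤ 5
  · by_cases c2 : (flt V i B2).card ≤ 5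
    · exact two_halves g hV hW hTV hTW hVW hWV hK hn hi hic hl hs hB1 hB2 a1 a2 b1 b2 c1 c2
    · refine two_halves g hV hW hTV hTW hVW hWV hK hn hi.symm (g.flip hic) ?_ hs hB1 hC2 a2 a1 b4 b3
        c1 (by omega)
      intro q hq
      have := hl q hq
      tauto
  · by_cases c2 : (flt V i B2).card ≤ 5
    · refine two_halves g hV hW hTV hTW hVW hWV hK hn (s := c (w i)) (t := v i) (g.flip hic)
        (by rw [g.inv]; exact hi.symm) ?_ hs hB2 hC1 b2 b1 a4 a3 c2 (by omega)
      intro q hq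
      have := hl q hq
      rw [g.inv]
      tauto
    · refine two_halves g hV hW hTV hTW hVW hWV hK hn (s := c (v i)) (t := w i) hic
        (by rw [g.inv]; exact hi) ?_ hs hC2 hC1 b3 b4 a3 a4 (by omega) (by omega)
      intro q hq
      have := hl q hq
      rw [g.inv]
      tauto

theorem main_finset (g : Good c) {V W : Finset (Fin d → S)} (hV : Code c V) (hW : Code c W)
    (hTV : TF c V) (hTW : TF c W) (hVW : Cv c V W) (hWV : Cv c W V)
    (hdis : ∀ v ∈ V, v ∉ W) (h0 : V.Nonempty) : 12 ≤ V.card := by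
  by_cases hK : K2 c V W
  · exact caseB g hV hW hTV hTW hVW hWV hK hdis h0
  · have : ∃ v ∈ V, ∃ w ∈ W, ¬ Dichotomous c v w ∧ ∃ a, Off a v w := by
      simpa [K2, and_assoc] using hK
    obtain ⟨v, hv, w, hw, hd, a, ha⟩ := this
    exact caseA g hV hW hTV hTW hVW hWV a hv hw ha
      (fun hh => hdis v hv (by rw [ha.eq hh.symm]; exact hw)) (fun hh => hd ⟨a, hh⟩)

theorem equiv_cv {V W : Finset (Fin d → S)} (h : Equivalent c (V : Set (Fin d → S)) W) :
    Cv c V W := by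
  rintro x hx ⟨v, hv, hxv⟩
  have h1 : x ∈ ⋃ v ∈ (V : Set (Fin d → S)), realize c v := by
    simp only [Set.mem_iUnion]
    exact ⟨v, hv, fun i => ⟨hx i, hxv i⟩⟩
  unfold Equivalent at h
  rw [h] at h1
  simp only [Set.mem_iUnion] at h1
  obtain ⟨w, hw, hxw⟩ := h1
  exact ⟨w, hw, fun i => (hxw i).2⟩

end

/-- If `V, W ⊆ S^d` are disjoint, equivalent, twin-pair-free polybox codes and
`V ≠ ∅`, then `|V| ≥ 12`. -/
theorem twelve_le_card_of_equiv_disjoint {S : Type*} [Fintype S] (c : S → S)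
    (hinv : ∀ s, c (c s) = s) (hne : ∀ s, c s ≠ s) {d : ℕ}
    (V W : Set (Fin d → S))
    (hV : PolyboxCode c V) (hW : PolyboxCode c W)
    (hequiv : Equivalent c V W)
    (hVtf : ∀ u ∈ V, ∀ v ∈ V, ¬ TwinPair c u v)
    (hWtf : ∀ u ∈ W, ∀ v ∈ W, ¬ TwinPair c u v)
    (hdisj : V ∩ W = ∅) (hVne : V.Nonempty) :
    12 ≤ V.ncard := by
  have g : Good c := ⟨hinv, hne⟩
  have fV : V.Finite := Set.toFinite V
  have fW : W.Finite := Set.toFinite W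
  obtain ⟨V, rfl⟩ : ∃ X : Finset (Fin d → S), V = ↑X := ⟨fV.toFinset, by simp⟩
  obtain ⟨W, rfl⟩ : ∃ X : Finset (Fin d → S), W = ↑X := ⟨fW.toFinset, by simp⟩
  rw [Set.ncard_coe_finset]
  refine main_finset g (V := V) (W := W) hV hW hVtf hWtf (equiv_cv hequiv)
    (equiv_cv (Eq.symm hequiv)) ?_ (by simpa using hVne)
  intro v hv hw
  have : v ∈ (V : Set (Fin d → S)) ∩ W := ⟨hv, hw⟩
  rw [hdisj] at this
  exact this
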